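/- Let a ∈ ℝ and let h, u be real C² functions on B₁* with Δh = 0 and Δu = ((∂h/∂x + a·y/|z|²)² + (∂h/∂y − a·x/|z|²)²)·e^{2u}, such that the holomorphic function F(z) := ∂h/∂x − i·∂h/∂y has finite order N at 0; set n := N if a = 0 and n := min(−1, N) otherwise. Suppose either (i) there are β < n+1 and c with u(z) + β·log|z| → c as z → 0, or (ii) u(z) + (n+1)·log|z| + log|log|z|| converges as z → 0, in which case set β := n+1. Let ω_∇ = M_r dr + M_θ dθ be the connection form determined by (h,u,a), and for r ∈ (0,1) let Φ_r : [0,2π] → M₂(ℝ) solve Φ_r'(s) = −M_θ(r e^{is})·Φ_r(s), Φ_r(0) = 𝟙. Then for every r ∈ (0,1) the trace of the holonomy matrix Φ_r(2π) equals 2·cos(πβ). -/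

import Mathlib

open Complex Real Set Topology Filter Matrix

/-- Partial derivative in the `x`-direction of a function on `ℂ ≅ ℝ²`. -/
noncomputable def pdx (f : ℂ → ℝ) (z : ℂ) : ℝ := deriv (fun t : ℝ => f (z + t)) 0

/-- Partial derivative in the `y`-direction. -/
noncomputable def pdy (f : ℂ → ℝ) (z : ℂ) : ℝ := deriv (fun t : ℝ => f (z + t * Complex.I)) 0

/-- The flat Laplacian `Δ = ∂²/∂x² + ∂²/∂y²`. -/
noncomputable def lap (f : ℂ → ℝ) (z : ℂ) : ℝ := pdx (pdx f) z + pdy (pdy f) z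

/-- The punctured open unit disc `B₁* = {0 < |z| < 1}`. -/
def PDisc : Set ℂ := {z : ℂ | 0 < ‖z‖ ∧ ‖z‖ < 1}

/-- Radial derivative `∂f/∂r` expressed in Cartesian coordinates. -/
noncomputable def pdr (f : ℂ → ℝ) (z : ℂ) : ℝ :=
  (z.re * pdx f z + z.im * pdy f z) / ‖z‖

/-- Angular derivative `∂f/∂θ` expressed in Cartesian coordinates. -/
noncomputable def pdθ (f : ℂ → ℝ) (z : ℂ) : ℝ :=
  -z.im * pdx f z + z.re * pdy f z

/-- `ω₁₁(∂_r)` where `2ω₁₁ = e^u (dh − a dθ) − du`. -/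
noncomputable def ω11r (h u : ℂ → ℝ) (a : ℝ) (z : ℂ) : ℝ :=
  (Real.exp (u z) * pdr h z - pdr u z) / 2

/-- `ω₁₁(∂_θ)`. -/
noncomputable def ω11θ (h u : ℂ → ℝ) (a : ℝ) (z : ℂ) : ℝ :=
  (Real.exp (u z) * (pdθ h z - a) - pdθ u z) / 2

/-- `ω₂₂(∂_r)` where `2ω₂₂ = −e^u (dh − a dθ) − du`. -/
noncomputable def ω22r (h u : ℂ → ℝ) (a : ℝ) (z : ℂ) : ℝ :=
  -(Real.exp (u z) * pdr h z + pdr u z) / 2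

/-- `ω₂₂(∂_θ)`. -/
noncomputable def ω22θ (h u : ℂ → ℝ) (a : ℝ) (z : ℂ) : ℝ :=
  -(Real.exp (u z) * (pdθ h z - a) + pdθ u z) / 2

/-- The `dθ`-component `M_θ` of the connection form `ω_∇ = M_r dr + M_θ dθ`. -/
noncomputable def Mθ (h u : ℂ → ℝ) (a : ℝ) (z : ℂ) : Matrix (Fin 2) (Fin 2) ℝ :=
  !![ω11θ h u a z, -‖z‖ * ω11r h u a z;
     ‖z‖ * ω22r h u a z, ω22θ h u a z]

/-- The `dr`-component `M_r` of the connection form. -/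
noncomputable def Mr (h u : ℂ → ℝ) (a : ℝ) (z : ℂ) : Matrix (Fin 2) (Fin 2) ℝ :=
  !![ω11r h u a z, ω11θ h u a z / ‖z‖;
     -ω22θ h u a z / ‖z‖, ω22r h u a z]

/-!
In the coordinate `w = log z` the special Kähler structure lives on the left half plane, where
`dh + aφ` is the differential of a harmonic function `H` and the connection form is
`A dx + B dy`, assembled from `e ^ U • dH` and `dU` with `U = u ∘ exp`. The two equations for
`(H, U)` say that this connection is flat, and `A` is `2πi`-periodic, so the holonomies along
different circles are conjugate and their trace does not depend on the radius.

It remains to let the radius tend to `0`, that is `x = Re w → -∞`. The hypotheses give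
`ΔU = |dH|² e ^ (2 U) → 0`, hence `e ^ U • dH → 0`, and `U + β x + κ log |x| → c`. An interior
gradient estimate for functions with small oscillation and small Laplacian, proved with the
maximum principle and a barrier on a half square, upgrades the latter to `∂ₓU → -β`, `∂ᵧU → 0`.
So the connection form tends to a constant one, whose holonomy is the rotation by `-πβ`.
-/

section UniformConvergence

theorem tendstoUniformlyOn_nhds_of_continuousOn {α β E : Type*} [TopologicalSpace α]
    [TopologicalSpace β] [PseudoMetricSpace E] {F : α → β → E} {U : Set α} {k : Set β} {x₀ : α}
    (hU : U ∈ 𝓝 x₀) (hk : IsCompact k) (hF : ContinuousOn F.uncurry (U ×ˢ k)) :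
    TendstoUniformlyOn F (F x₀) (𝓝 x₀) k := by
  rw [Metric.tendstoUniformlyOn_iff]
  intro ε hε
  obtain ⟨v, hv, hvε⟩ := hk.mem_uniformity_of_prod hF (mem_of_mem_nhds hU)
    (Metric.dist_mem_uniformity hε)
  rw [nhdsWithin_eq_nhds.2 hU] at hv
  filter_upwards [hv] with x hx s hs
  rw [dist_comm]
  exact hvε x hx s hs

theorem tendstoUniformlyOn_slope {β E : Type*} [TopologicalSpace β] [NormedAddCommGroup E]
    [NormedSpace ℝ E] {F F' : ℝ → β → E} {U : Set ℝ} {k : Set β} {x₀ : ℝ}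
    (hU : U ∈ 𝓝 x₀) (hk : IsCompact k)
    (hF : ∀ x ∈ U, ∀ s ∈ k, HasDerivAt (fun y => F y s) (F' x s) x)
    (hF' : ContinuousOn F'.uncurry (U ×ˢ k)) :
    TendstoUniformlyOn (fun x s => slope (fun y => F y s) x₀ x) (F' x₀) (𝓝[≠] x₀) k := by
  rw [Metric.tendstoUniformlyOn_iff]
  intro ε hε
  have hclose := Metric.tendstoUniformlyOn_iff.1
    (tendstoUniformlyOn_nhds_of_continuousOn hU hk hF') (ε / 2) (half_pos hε)
  obtain ⟨r, hr, hball⟩ := Metric.eventually_nhds_iff_ball.1 (hclose.and hU)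
  filter_upwards [mem_nhdsWithin_of_mem_nhds (Metric.ball_mem_nhds x₀ hr), self_mem_nhdsWithin]
    with x hx (hne : x ≠ x₀) s hs
  have hmv := (convex_ball x₀ r).norm_image_sub_le_of_norm_hasDerivWithin_le (C := ε / 2)
    (f := fun y => F y s - y • F' x₀ s) (f' := fun y => F' y s - F' x₀ s)
    (fun y hy => (((hF y (hball y hy).2 s hs).sub
      ((hasDerivAt_id y).smul_const (F' x₀ s))).congr_deriv (by simp)).hasDerivWithinAt)
    (fun y hy => by rw [← dist_eq_norm, dist_comm]; exact ((hball y hy).1 s hs).le)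
    (Metric.mem_ball_self hr) hx
  have hne' : 0 < ‖x - x₀‖ := norm_pos_iff.2 (sub_ne_zero.2 hne)
  calc dist (F' x₀ s) (slope (fun y => F y s) x₀ x)
      = ‖x - x₀‖⁻¹ * ‖F x s - x • F' x₀ s - (F x₀ s - x₀ • F' x₀ s)‖ := by
        rw [← norm_inv, ← norm_smul, dist_comm, dist_eq_norm, slope_def_module]
        congr 1
        rw [sub_sub_sub_comm, ← sub_smul, smul_sub _ (F x s - F x₀ s),
          inv_smul_smul₀ (sub_ne_zero.2 hne)]
    _ ≤ ‖x - x₀‖⁻¹ * (ε / 2 * ‖x - x₀‖) := by gcongr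
    _ = ε / 2 := by field_simp
    _ < ε := half_lt_self hε

end UniformConvergence

section LinearODE

variable {𝔸 E ι : Type*} [NormedRing 𝔸] [NormedAddCommGroup E] [NormedSpace ℝ E] [Module 𝔸 E]
  [IsBoundedSMul 𝔸 E] {T : ℝ}

theorem norm_le_gronwallBound_of_linear_ode {A : ℝ → 𝔸} {b X : ℝ → E} {K ε : ℝ}
    (hA : ∀ s ∈ Icc 0 T, ‖A s‖ ≤ K) (hb : ∀ s ∈ Icc 0 T, ‖b s‖ ≤ ε) (hX0 : X 0 = 0)
    (hX : ∀ s ∈ Icc 0 T, HasDerivAt X (A s • X s + b s) s) :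
    ∀ s ∈ Icc 0 T, ‖X s‖ ≤ gronwallBound 0 K ε s := by
  have h := norm_le_gronwallBound_of_norm_deriv_right_le (K := K) (ε := ε) (δ := 0)
    (fun s hs => (hX s hs).continuousAt.continuousWithinAt)
    (fun s hs => (hX s (Ico_subset_Icc_self hs)).hasDerivWithinAt) (by simp [hX0])
    fun s hs => (norm_add_le _ _).trans (add_le_add
      ((norm_smul_le _ _).trans (by gcongr; exact hA s (Ico_subset_Icc_self hs)))
      (hb s (Ico_subset_Icc_self hs)))
  simpa only [sub_zero] using h

theorem tendstoUniformlyOn_of_linear_ode {l : Filter ι} {A : ι → ℝ → 𝔸} {A₀ : ℝ → 𝔸}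
    {b X : ι → ℝ → E} {b₀ X₀ : ℝ → E} (hA : TendstoUniformlyOn A A₀ l (Icc 0 T))
    (hA₀ : ContinuousOn A₀ (Icc 0 T)) (hb : TendstoUniformlyOn b b₀ l (Icc 0 T))
    (hX : ∀ᶠ i in l, ∀ s ∈ Icc 0 T, HasDerivAt (X i) (A i s • X i s + b i s) s)
    (hX₀ : ∀ s ∈ Icc 0 T, HasDerivAt X₀ (A₀ s • X₀ s + b₀ s) s)
    (hinit : ∀ᶠ i in l, X i 0 = X₀ 0) : TendstoUniformlyOn X X₀ l (Icc 0 T) := by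
  obtain ⟨K, hK⟩ := isCompact_Icc.exists_bound_of_continuousOn hA₀
  obtain ⟨M, hM⟩ := isCompact_Icc.exists_bound_of_continuousOn
    fun s hs => (hX₀ s hs).continuousAt.continuousWithinAt
  rw [Metric.tendstoUniformlyOn_iff] at hA hb ⊢
  intro η hη
  obtain ⟨δ, ⟨hδη, hδ1⟩, hδ0 : 0 < δ⟩ : ∃ δ : ℝ,
      (gronwallBound 0 (K + 1) (δ * M + δ) T < η ∧ δ < 1) ∧ 0 < δ := by
    have hcont : Continuous fun δ : ℝ => gronwallBound 0 (K + 1) (δ * M + δ) T :=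
      (gronwallBound_continuous_ε 0 (K + 1) T).comp (by fun_prop)
    have hlim := (hcont.tendsto' 0 0 (by simp [gronwallBound_ε0_δ0])).eventually_lt_const hη
    exact (((hlim.and (eventually_lt_nhds one_pos)).filter_mono nhdsWithin_le_nhds).and
      (self_mem_nhdsWithin (s := Ioi 0))).exists
  filter_upwards [hA δ hδ0, hb δ hδ0, hX, hinit] with i hAi hbi hXi hi s hs
  have hbound := norm_le_gronwallBound_of_linear_ode (A := A i) (X := fun s => X i s - X₀ s)
    (b := fun s => (A i s - A₀ s) • X₀ s + (b i s - b₀ s)) (K := K + 1) (ε := δ * M + δ)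
    (fun s hs => by
      have := hAi s hs
      rw [dist_comm, dist_eq_norm] at this
      linarith [hK s hs, norm_le_norm_add_norm_sub' (A i s) (A₀ s)])
    (fun s hs => by
      refine (norm_add_le _ _).trans (add_le_add ((norm_smul_le _ _).trans ?_) ?_)
      · gcongr
        · rw [← dist_eq_norm, dist_comm]; exact (hAi s hs).le
        · exact hM s hs
      · rw [← dist_eq_norm, dist_comm]; exact (hbi s hs).le)
    (by simp [hi])
    (fun s hs => ((hXi s hs).sub (hX₀ s hs)).congr_deriv (by
      simp only [sub_smul, smul_sub]; abel))
  have hM0 := (norm_nonneg _).trans (hM s hs)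
  have hK0 := (norm_nonneg _).trans (hK s hs)
  rw [dist_comm, dist_eq_norm]
  exact (hbound s hs).trans_lt
    ((gronwallBound_mono le_rfl (by positivity) (by positivity) hs.2).trans_lt hδη)

variable [NormedAlgebra ℝ 𝔸] [IsScalarTower ℝ 𝔸 E]

theorem hasDerivAt_param_of_linear_ode {L L' : ℝ → ℝ → 𝔸} {Φ : ℝ → ℝ → E} {Y : ℝ → E} {x₀ : E}
    {U : Set ℝ} {ρ : ℝ} (hU : U ∈ 𝓝 ρ) (hT : 0 ≤ T)
    (hL : ContinuousOn L.uncurry (U ×ˢ Icc 0 T)) (hL' : ContinuousOn L'.uncurry (U ×ˢ Icc 0 T))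
    (hLL' : ∀ x ∈ U, ∀ s ∈ Icc 0 T, HasDerivAt (fun y => L y s) (L' x s) x)
    (hΦ : ∀ x ∈ U, ∀ s ∈ Icc 0 T, HasDerivAt (Φ x) (L x s • Φ x s) s)
    (hΦ0 : ∀ x ∈ U, Φ x 0 = x₀) (hY0 : Y 0 = 0)
    (hY : ∀ s ∈ Icc 0 T, HasDerivAt Y (L ρ s • Y s + L' ρ s • Φ ρ s) s) :
    HasDerivAt (fun x => Φ x T) (Y T) ρ := by
  have hρ := mem_of_mem_nhds hU
  have hΦρ : ContinuousOn (fun p : ℝ × ℝ => Φ ρ p.2) (U ×ˢ Icc 0 T) :=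
    ContinuousOn.comp (t := Icc 0 T) (fun s hs => (hΦ ρ hρ s hs).continuousAt.continuousWithinAt)
      continuousOn_snd fun p hp => hp.2
  have hforce := tendstoUniformlyOn_slope (F := fun x s => L x s • Φ ρ s)
    (F' := fun x s => L' x s • Φ ρ s) hU isCompact_Icc
    (fun x hx s hs => (hLL' x hx s hs).smul_const (Φ ρ s)) (hL'.smul hΦρ)
  have hcoeff : TendstoUniformlyOn L (L ρ) (𝓝[≠] ρ) (Icc 0 T) := fun u hu =>
    (tendstoUniformlyOn_nhds_of_continuousOn hU isCompact_Icc hL u hu).filter_mono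
      nhdsWithin_le_nhds
  rw [hasDerivAt_iff_tendsto_slope]
  refine (tendstoUniformlyOn_of_linear_ode (X := fun x s => slope (fun y => Φ y s) ρ x) hcoeff
    (hL.uncurry_left ρ hρ) hforce ?_ hY ?_).tendsto_at (right_mem_Icc.2 hT)
  · filter_upwards [mem_nhdsWithin_of_mem_nhds hU] with x hx s hs
    simp only [slope_def_module]
    refine (((hΦ x hx s hs).sub (hΦ ρ hρ s hs)).const_smul (x - ρ)⁻¹).congr_deriv ?_
    rw [smul_comm, ← smul_add]
    simp only [smul_sub, sub_add_sub_cancel]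
  · filter_upwards [mem_nhdsWithin_of_mem_nhds hU] with x hx
    simp [slope_def_module, hΦ0 x hx, hΦ0 ρ hρ, hY0]

end LinearODE

section FlatConnection

variable {𝔸 E : Type*} [NormedRing 𝔸] [NormedAlgebra ℝ 𝔸] [NormedAddCommGroup E]
  [NormedSpace ℝ E] {A B : ℂ → 𝔸} {U : Set ℝ}

/-- The connection `d + A dx + B dy` on a subset `S` of `ℂ ≅ ℝ²`, with coefficients in a Banach
algebra, is of class `C¹` and has curvature `∂ₓB - ∂_yA + [A, B]` equal to zero. -/
structure IsFlatConnectionOn (A B : ℂ → 𝔸) (S : Set ℂ) : Prop where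
  contDiffOn_fst : ContDiffOn ℝ 1 A S
  contDiffOn_snd : ContDiffOn ℝ 1 B S
  curvature_eq_zero : ∀ w ∈ S,
    fderiv ℝ B w 1 - fderiv ℝ A w Complex.I + A w * B w - B w * A w = 0

theorem hasDerivAt_comp_horizontal_line {f : ℂ → E} {x y : ℝ}
    (hf : DifferentiableAt ℝ f (x + y * Complex.I)) :
    HasDerivAt (fun t : ℝ => f (t + y * Complex.I)) (fderiv ℝ f (x + y * Complex.I) 1) x :=
  hf.hasFDerivAt.comp_hasDerivAt x (ofRealCLM.hasDerivAt.add_const _)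

theorem hasDerivAt_comp_vertical_line {f : ℂ → E} {x y : ℝ}
    (hf : DifferentiableAt ℝ f (x + y * Complex.I)) :
    HasDerivAt (fun t : ℝ => f (x + t * Complex.I))
      (fderiv ℝ f (x + y * Complex.I) Complex.I) y :=
  hf.hasFDerivAt.comp_hasDerivAt y
    ((ofRealCLM.hasDerivAt.mul_const Complex.I).const_add _ |>.congr_deriv (by simp))

/-- By flatness, `s ↦ Φ x s * A x - A (x + s * I) * Φ x s` solves the linear equation obtained by
differentiating the transport equation with respect to `x`. -/
theorem IsFlatConnectionOn.hasDerivAt_transport (hAB : IsFlatConnectionOn A B (re ⁻¹' U))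
    (hU : IsOpen U) {Φ : ℝ → ℝ → 𝔸} {T : ℝ} (hT : 0 ≤ T) (hΦ0 : ∀ x ∈ U, Φ x 0 = 1)
    (hΦ : ∀ x ∈ U, ∀ s ∈ Icc 0 T, HasDerivAt (Φ x) (-B (x + s * Complex.I) * Φ x s) s)
    {ρ : ℝ} (hρ : ρ ∈ U) :
    HasDerivAt (fun x => Φ x T) (Φ ρ T * A ρ - A (ρ + T * Complex.I) * Φ ρ T) ρ := by
  have hS : IsOpen (re ⁻¹' U) := hU.preimage continuous_re
  have hmem : ∀ x ∈ U, ∀ s : ℝ, (x + s * Complex.I : ℂ) ∈ re ⁻¹' U := fun x hx s => by simpa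
  have hdiff {C : ℂ → 𝔸} (hC : ContDiffOn ℝ 1 C (re ⁻¹' U)) {w : ℂ} (hw : w ∈ re ⁻¹' U) :
      DifferentiableAt ℝ C w :=
    (hC.contDiffAt (hS.mem_nhds hw)).differentiableAt one_ne_zero
  have hline : ContinuousOn (fun p : ℝ × ℝ => (p.1 + p.2 * Complex.I : ℂ)) (U ×ˢ Icc 0 T) := by
    fun_prop
  have hmaps : MapsTo (fun p : ℝ × ℝ => (p.1 + p.2 * Complex.I : ℂ)) (U ×ˢ Icc 0 T) (re ⁻¹' U) :=
    fun p hp => hmem _ hp.1 _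
  have hB' := ((hAB.contDiffOn_snd.continuousOn_fderiv_of_isOpen hS le_rfl).clm_apply
    (continuousOn_const (c := (1 : ℂ)))).neg
  refine (hasDerivAt_param_of_linear_ode (L := fun x s => -B (x + s * Complex.I))
    (L' := fun x s => -fderiv ℝ B (x + s * Complex.I) 1) (x₀ := 1)
    (Y := fun s => Φ ρ s * A ρ - A (ρ + s * Complex.I) * Φ ρ s)
    (hU.mem_nhds hρ) hT (hAB.contDiffOn_snd.continuousOn.neg.comp hline hmaps)
    (hB'.comp hline hmaps)
    (fun x hx s _ => (hasDerivAt_comp_horizontal_line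
      (hdiff hAB.contDiffOn_snd (hmem x hx s))).neg) hΦ hΦ0 (by simp [hΦ0 ρ hρ]) ?_)
  intro s hs
  have hA := hasDerivAt_comp_vertical_line (hdiff hAB.contDiffOn_fst (hmem ρ hρ s))
  refine (((hΦ ρ hρ s hs).mul_const (A ρ)).sub (hA.mul (hΦ ρ hρ s hs))).congr_deriv ?_
  have hcurv := hAB.curvature_eq_zero _ (hmem ρ hρ s)
  set w : ℂ := ρ + s * Complex.I
  rw [show fderiv ℝ A w Complex.I = fderiv ℝ B w 1 + A w * B w - B w * A w by
    rw [eq_comm, ← sub_eq_zero, ← hcurv]; abel]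
  simp only [smul_eq_mul]
  noncomm_ring

theorem IsFlatConnectionOn.tracial_transport_eq (hAB : IsFlatConnectionOn A B (re ⁻¹' U))
    (hU : IsOpen U) (hUconv : Convex ℝ U) {Φ : ℝ → ℝ → 𝔸} {T : ℝ} (hT : 0 ≤ T)
    (hA : ∀ x ∈ U, A (x + T * Complex.I) = A x) (hΦ0 : ∀ x ∈ U, Φ x 0 = 1)
    (hΦ : ∀ x ∈ U, ∀ s ∈ Icc 0 T, HasDerivAt (Φ x) (-B (x + s * Complex.I) * Φ x s) s)
    (τ : 𝔸 →L[ℝ] E) (hτ : ∀ M N, τ (M * N) = τ (N * M)) {x y : ℝ} (hx : x ∈ U) (hy : y ∈ U) :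
    τ (Φ x T) = τ (Φ y T) := by
  have hderiv : ∀ ρ ∈ U, HasDerivWithinAt (fun x => τ (Φ x T)) 0 U ρ := fun ρ hρ =>
    ((τ.hasFDerivAt.comp_hasDerivAt ρ
      (hAB.hasDerivAt_transport hU hT hΦ0 hΦ hρ)).congr_deriv
        (by rw [hA ρ hρ, map_sub, hτ, sub_self])).hasDerivWithinAt
  have h := hUconv.norm_image_sub_le_of_norm_hasDerivWithin_le (C := 0) hderiv (by simp) hy hx
  rwa [zero_mul, norm_le_zero_iff, sub_eq_zero] at h

theorem tendstoUniformly_of_tendsto_comap_re {X : Type*} [UniformSpace X] {f : ℂ → X}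
    {b : X} {l : Filter ℝ} (hf : Tendsto f (comap re l) (𝓝 b)) :
    TendstoUniformly (fun x s : ℝ => f (x + s * Complex.I)) (fun _ => b) l := fun v hv => by
  filter_upwards [eventually_comap.1 (hf.eventually (UniformSpace.ball_mem_nhds b hv))]
    with x hx s using hx _ (by simp)

theorem IsFlatConnectionOn.tracial_transport_eq_of_tendsto {B₀ : 𝔸} {l : Filter ℝ} [l.NeBot]
    (hAB : IsFlatConnectionOn A B (re ⁻¹' U)) (hU : IsOpen U) (hUconv : Convex ℝ U) (hl : U ∈ l)
    {Φ : ℝ → ℝ → 𝔸} {Ψ : ℝ → 𝔸} {T : ℝ} (hT : 0 ≤ T)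
    (hA : ∀ x ∈ U, A (x + T * Complex.I) = A x) (hB : Tendsto B (comap re l) (𝓝 B₀))
    (hΦ0 : ∀ x ∈ U, Φ x 0 = 1)
    (hΦ : ∀ x ∈ U, ∀ s ∈ Icc 0 T, HasDerivAt (Φ x) (-B (x + s * Complex.I) * Φ x s) s)
    (hΨ0 : Ψ 0 = 1) (hΨ : ∀ s ∈ Icc 0 T, HasDerivAt Ψ (-B₀ * Ψ s) s)
    (τ : 𝔸 →L[ℝ] E) (hτ : ∀ M N, τ (M * N) = τ (N * M)) {x : ℝ} (hx : x ∈ U) :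
    τ (Φ x T) = τ (Ψ T) := by
  have hlim : TendstoUniformlyOn Φ Ψ l (Icc 0 T) :=
    tendstoUniformlyOn_of_linear_ode (A := fun x s : ℝ => -B (x + s * Complex.I))
      (A₀ := fun _ => -B₀) (b := fun _ _ => (0 : 𝔸)) (b₀ := fun _ => 0)
      (tendstoUniformly_of_tendsto_comap_re hB.neg).tendstoUniformlyOn continuousOn_const
      (fun v hv => Eventually.of_forall fun _ _ _ => refl_mem_uniformity hv)
      (by filter_upwards [hl] with x hx s hs using by simpa using hΦ x hx s hs)
      (fun s hs => by simpa using hΨ s hs)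
      (by filter_upwards [hl] with x hx using by rw [hΦ0 x hx, hΨ0])
  refine tendsto_nhds_unique_of_eventuallyEq tendsto_const_nhds
    ((τ.continuous.tendsto _).comp (hlim.tendsto_at (right_mem_Icc.2 hT))) ?_
  filter_upwards [hl] with y hy
  exact hAB.tracial_transport_eq hU hUconv hT hA hΦ0 hΦ τ hτ hx hy

end FlatConnection

section PartialDerivatives

variable {f g : ℂ → ℝ} {z : ℂ} {S : Set ℂ}

theorem pdx_eq_of_hasFDerivAt {f' : ℂ →L[ℝ] ℝ} (hf : HasFDerivAt f f' z) : pdx f z = f' 1 :=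
  (HasFDerivAt.comp_hasDerivAt (x := (0 : ℝ)) (f := fun t : ℝ => z + t) (by simpa using hf)
    (ofRealCLM.hasDerivAt.const_add z)).deriv

theorem pdy_eq_of_hasFDerivAt {f' : ℂ →L[ℝ] ℝ} (hf : HasFDerivAt f f' z) :
    pdy f z = f' Complex.I :=
  (HasFDerivAt.comp_hasDerivAt (x := (0 : ℝ)) (f := fun t : ℝ => z + t * Complex.I)
    (by simpa using hf)
    ((ofRealCLM.hasDerivAt.mul_const Complex.I).const_add z |>.congr_deriv (by simp))).deriv

theorem fderiv_apply_one_eq_pdx (hf : DifferentiableAt ℝ f z) : fderiv ℝ f z 1 = pdx f z :=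
  (pdx_eq_of_hasFDerivAt hf.hasFDerivAt).symm

theorem fderiv_apply_I_eq_pdy (hf : DifferentiableAt ℝ f z) :
    fderiv ℝ f z Complex.I = pdy f z :=
  (pdy_eq_of_hasFDerivAt hf.hasFDerivAt).symm

theorem contDiffOn_pdx {m n : WithTop ℕ∞} (hS : IsOpen S) (hf : ContDiffOn ℝ n f S)
    (hmn : m + 1 ≤ n) : ContDiffOn ℝ m (pdx f) S :=
  ((hf.fderiv_of_isOpen hS hmn).clm_apply contDiffOn_const).congr fun _ hz =>
    (fderiv_apply_one_eq_pdx ((hf.contDiffAt (hS.mem_nhds hz)).differentiableAt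
      (by rintro rfl; simp at hmn))).symm

theorem contDiffOn_pdy {m n : WithTop ℕ∞} (hS : IsOpen S) (hf : ContDiffOn ℝ n f S)
    (hmn : m + 1 ≤ n) : ContDiffOn ℝ m (pdy f) S :=
  ((hf.fderiv_of_isOpen hS hmn).clm_apply contDiffOn_const).congr fun _ hz =>
    (fderiv_apply_I_eq_pdy ((hf.contDiffAt (hS.mem_nhds hz)).differentiableAt
      (by rintro rfl; simp at hmn))).symm

theorem pdx_pdy_comm (hS : IsOpen S) (hf : ContDiffOn ℝ 2 f S) (hz : z ∈ S) :
    pdx (pdy f) z = pdy (pdx f) z := by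
  have hnhds := hS.mem_nhds hz
  have hdiff : ∀ᶠ w in 𝓝 z, DifferentiableAt ℝ f w := by
    filter_upwards [hnhds] with w hw
    exact (hf.contDiffAt (hS.mem_nhds hw)).differentiableAt two_ne_zero
  have hfderiv : DifferentiableAt ℝ (fderiv ℝ f) z :=
    ((hf.fderiv_of_isOpen hS (m := 1) (by norm_num)).contDiffAt hnhds).differentiableAt one_ne_zero
  have happly (v : ℂ) := hfderiv.hasFDerivAt.clm_apply (hasFDerivAt_const v z)
  rw [pdx_eq_of_hasFDerivAt ((happly Complex.I).congr_of_eventuallyEq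
      (hdiff.mono fun _ hw => (fderiv_apply_I_eq_pdy hw).symm)),
    pdy_eq_of_hasFDerivAt ((happly 1).congr_of_eventuallyEq
      (hdiff.mono fun _ hw => (fderiv_apply_one_eq_pdx hw).symm))]
  simpa using (hf.contDiffAt hnhds).isSymmSndFDerivAt (by simp) 1 Complex.I

theorem fderiv_apply_eq_pdx_pdy (hf : DifferentiableAt ℝ f z) (v : ℂ) :
    fderiv ℝ f z v = v.re * pdx f z + v.im * pdy f z := by
  rw [← fderiv_apply_one_eq_pdx hf, ← fderiv_apply_I_eq_pdy hf, ← smul_eq_mul, ← smul_eq_mul,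
    ← map_smul, ← map_smul, ← map_add]
  simp [re_add_im]

theorem pdx_sub (hf : DifferentiableAt ℝ f z) (hg : DifferentiableAt ℝ g z) :
    pdx (fun w => f w - g w) z = pdx f z - pdx g z := by
  rw [pdx_eq_of_hasFDerivAt (hf.hasFDerivAt.fun_sub hg.hasFDerivAt), _root_.sub_apply,
    fderiv_apply_one_eq_pdx hf, fderiv_apply_one_eq_pdx hg]

theorem pdy_sub (hf : DifferentiableAt ℝ f z) (hg : DifferentiableAt ℝ g z) :
    pdy (fun w => f w - g w) z = pdy f z - pdy g z := by
  rw [pdy_eq_of_hasFDerivAt (hf.hasFDerivAt.fun_sub hg.hasFDerivAt), _root_.sub_apply,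
    fderiv_apply_I_eq_pdy hf, fderiv_apply_I_eq_pdy hg]

theorem pdx_congr_of_eventuallyEq (h : f =ᶠ[𝓝 z] g) : pdx f z = pdx g z :=
  EventuallyEq.deriv_eq <| (Continuous.tendsto' (f := fun t : ℝ => z + t) (by fun_prop) 0 z
    (by simp)).eventually h

theorem pdy_congr_of_eventuallyEq (h : f =ᶠ[𝓝 z] g) : pdy f z = pdy g z :=
  EventuallyEq.deriv_eq <| (Continuous.tendsto' (f := fun t : ℝ => z + t * Complex.I)
    (by fun_prop) 0 z (by simp)).eventually h

theorem differentiableAt_pd_of_contDiffOn (hS : IsOpen S) (hf : ContDiffOn ℝ 2 f S)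
    (hz : z ∈ S) : DifferentiableAt ℝ f z ∧ DifferentiableAt ℝ (pdx f) z ∧
      DifferentiableAt ℝ (pdy f) z := by
  have hle : (1 : WithTop ℕ∞) + 1 ≤ 2 := by norm_num
  exact ⟨(hf.contDiffAt (hS.mem_nhds hz)).differentiableAt two_ne_zero,
    ((contDiffOn_pdx hS hf hle).contDiffAt (hS.mem_nhds hz)).differentiableAt one_ne_zero,
    ((contDiffOn_pdy hS hf hle).contDiffAt (hS.mem_nhds hz)).differentiableAt one_ne_zero⟩

theorem lap_sub (hS : IsOpen S) (hf : ContDiffOn ℝ 2 f S) (hg : ContDiffOn ℝ 2 g S)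
    (hz : z ∈ S) : lap (fun w => f w - g w) z = lap f z - lap g z := by
  obtain ⟨-, hfx, hfy⟩ := differentiableAt_pd_of_contDiffOn hS hf hz
  obtain ⟨-, hgx, hgy⟩ := differentiableAt_pd_of_contDiffOn hS hg hz
  have hdiff : ∀ᶠ w in 𝓝 z, DifferentiableAt ℝ f w ∧ DifferentiableAt ℝ g w := by
    filter_upwards [hS.mem_nhds hz] with w hw
    exact ⟨(differentiableAt_pd_of_contDiffOn hS hf hw).1,
      (differentiableAt_pd_of_contDiffOn hS hg hw).1⟩
  rw [lap, pdx_congr_of_eventuallyEq (hdiff.mono fun _ hw => pdx_sub hw.1 hw.2),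
    pdy_congr_of_eventuallyEq (hdiff.mono fun _ hw => pdy_sub hw.1 hw.2), pdx_sub hfx hgx,
    pdy_sub hfy hgy, lap, lap]
  ring

end PartialDerivatives

section SpecialKahlerConnection

/-- The matrix `½ (p σ + q τ - r - s J)` with `σ = diag(1, -1)`, `τ = !![0, 1; 1, 0]` and
`J = !![0, 1; -1, 0]`. The connection form of a special Kähler structure takes values of this
shape. -/
noncomputable def connMatrix (p q r s : ℝ) : Matrix (Fin 2) (Fin 2) ℝ :=
  !![(p - r) / 2, (q - s) / 2; (q + s) / 2, -(p + r) / 2]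

theorem connMatrix_eq_smul_sum (p q r s : ℝ) :
    connMatrix p q r s = p • connMatrix 1 0 0 0 + q • connMatrix 0 1 0 0 +
      r • connMatrix 0 0 1 0 + s • connMatrix 0 0 0 1 := by
  ext i j
  fin_cases i <;> fin_cases j <;> simp [connMatrix] <;> ring

theorem connMatrix_commutator (p q r s : ℝ) :
    connMatrix p q r s * connMatrix q (-p) s (-r) - connMatrix q (-p) s (-r) * connMatrix p q r s
      = connMatrix (s * p - q * r) (p * r + q * s) 0 (p ^ 2 + q ^ 2) := by
  ext i j
  fin_cases i <;> fin_cases j <;> simp [connMatrix] <;> ring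

theorem connMatrix_sub_add (p q r s p' q' r' s' p'' q'' r'' s'' : ℝ) :
    connMatrix p q r s - connMatrix p' q' r' s' + connMatrix p'' q'' r'' s'' =
      connMatrix (p - p' + p'') (q - q' + q'') (r - r' + r'') (s - s' + s'') := by
  ext i j
  fin_cases i <;> fin_cases j <;> simp [connMatrix] <;> ring

theorem connMatrix_zero : connMatrix 0 0 0 0 = 0 := by
  ext i j
  fin_cases i <;> fin_cases j <;> simp [connMatrix]

/-- The `dx`-coefficient of the special Kähler connection given by `(H, U)` with `a = 0`. -/
noncomputable def connX (H U : ℂ → ℝ) (w : ℂ) : Matrix (Fin 2) (Fin 2) ℝ :=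
  connMatrix (Real.exp (U w) * pdx H w) (Real.exp (U w) * pdy H w) (pdx U w) (pdy U w)

/-- The `dy`-coefficient of the special Kähler connection given by `(H, U)` with `a = 0`. -/
noncomputable def connY (H U : ℂ → ℝ) (w : ℂ) : Matrix (Fin 2) (Fin 2) ℝ :=
  connMatrix (Real.exp (U w) * pdy H w) (-(Real.exp (U w) * pdx H w)) (pdy U w) (-pdx U w)

open scoped Matrix.Norms.Operator

theorem contDiffOn_connMatrix {p q r s : ℂ → ℝ} {S : Set ℂ} {n : WithTop ℕ∞}
    (hp : ContDiffOn ℝ n p S) (hq : ContDiffOn ℝ n q S) (hr : ContDiffOn ℝ n r S)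
    (hs : ContDiffOn ℝ n s S) :
    ContDiffOn ℝ n (fun w => connMatrix (p w) (q w) (r w) (s w)) S := by
  simp only [connMatrix_eq_smul_sum (p _)]
  exact (((hp.smul contDiffOn_const).add (hq.smul contDiffOn_const)).add
    (hr.smul contDiffOn_const)).add (hs.smul contDiffOn_const)

theorem fderiv_connMatrix_apply {p q r s : ℂ → ℝ} {w : ℂ} (hp : DifferentiableAt ℝ p w)
    (hq : DifferentiableAt ℝ q w) (hr : DifferentiableAt ℝ r w) (hs : DifferentiableAt ℝ s w)
    (v : ℂ) :
    fderiv ℝ (fun w => connMatrix (p w) (q w) (r w) (s w)) w v =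
      connMatrix (fderiv ℝ p w v) (fderiv ℝ q w v) (fderiv ℝ r w v) (fderiv ℝ s w v) := by
  simp only [connMatrix_eq_smul_sum (p _), connMatrix_eq_smul_sum (fderiv ℝ p w v)]
  have hsum := (((hp.hasFDerivAt.smul_const (connMatrix 1 0 0 0)).fun_add
    (hq.hasFDerivAt.smul_const (connMatrix 0 1 0 0))).fun_add
      (hr.hasFDerivAt.smul_const (connMatrix 0 0 1 0))).fun_add
        (hs.hasFDerivAt.smul_const (connMatrix 0 0 0 1))
  exact congrArg (· v) hsum.fderiv

theorem fderiv_exp_mul_apply {E : Type*} [NormedAddCommGroup E] [NormedSpace ℝ E] {U f : E → ℝ}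
    {w : E} (hU : DifferentiableAt ℝ U w) (hf : DifferentiableAt ℝ f w) (v : E) :
    fderiv ℝ (fun w => Real.exp (U w) * f w) w v =
      Real.exp (U w) * (fderiv ℝ U w v * f w + fderiv ℝ f w v) := by
  rw [(hU.hasFDerivAt.exp.fun_mul hf.hasFDerivAt).fderiv]
  simp only [_root_.add_apply, _root_.smul_apply, smul_eq_mul]
  ring

theorem isFlatConnectionOn_connX_connY {H U : ℂ → ℝ} {S : Set ℂ} (hS : IsOpen S)
    (hH : ContDiffOn ℝ 2 H S) (hU : ContDiffOn ℝ 2 U S) (hharm : ∀ w ∈ S, lap H w = 0)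
    (hpde : ∀ w ∈ S, lap U w = (pdx H w ^ 2 + pdy H w ^ 2) * Real.exp (2 * U w)) :
    IsFlatConnectionOn (connX H U) (connY H U) S := by
  have hle : (1 : WithTop ℕ∞) + 1 ≤ 2 := by norm_num
  have hexp := (hU.of_le one_le_two).exp
  have hHx := hexp.mul (contDiffOn_pdx hS hH hle)
  have hHy := hexp.mul (contDiffOn_pdy hS hH hle)
  have hUx := contDiffOn_pdx hS hU hle
  have hUy := contDiffOn_pdy hS hU hle
  refine ⟨contDiffOn_connMatrix hHx hHy hUx hUy, contDiffOn_connMatrix hHy hHx.neg hUy hUx.neg,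
    fun w hw => ?_⟩
  have hdiff {f : ℂ → ℝ} (hf : ContDiffOn ℝ 1 f S) : DifferentiableAt ℝ f w :=
    (hf.contDiffAt (hS.mem_nhds hw)).differentiableAt one_ne_zero
  have hUw := hdiff (hU.of_le one_le_two)
  have hHxw := hdiff (contDiffOn_pdx hS hH hle)
  have hHyw := hdiff (contDiffOn_pdy hS hH hle)
  have hdx := fderiv_connMatrix_apply (hdiff hHy) (hdiff hHx.neg) (hdiff hUy) (hdiff hUx.neg) 1
  have hdy := fderiv_connMatrix_apply (hdiff hHx) (hdiff hHy) (hdiff hUx) (hdiff hUy) Complex.I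
  rw [add_sub_assoc, connX, connY, connMatrix_commutator]
  refine (congrArg₂ (fun M N => M - N + _) hdx hdy).trans ?_
  simp only [fderiv_fun_neg, _root_.neg_apply, fderiv_exp_mul_apply hUw hHxw,
    fderiv_exp_mul_apply hUw hHyw, fderiv_apply_one_eq_pdx, fderiv_apply_I_eq_pdy, hUw, hHxw,
    hHyw, hdiff hUx, hdiff hUy, connMatrix_sub_add]
  rw [← connMatrix_zero, pdx_pdy_comm hS hH hw, pdx_pdy_comm hS hU hw]
  have hharmw : pdx (pdx H) w + pdy (pdy H) w = 0 := hharm w hw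
  have hpdew : pdx (pdx U) w + pdy (pdy U) w = _ := hpde w hw
  have hexp2 : Real.exp (2 * U w) = Real.exp (U w) ^ 2 := by rw [← Real.exp_nat_mul]; norm_num
  congr 1
  · ring
  · linear_combination -Real.exp (U w) * hharmw
  · ring
  · linear_combination -hpdew - (pdx H w ^ 2 + pdy H w ^ 2) * hexp2

end SpecialKahlerConnection

section LogCoordinate

variable {f : ℂ → ℝ} {w : ℂ} {S : Set ℂ}

theorem hasFDerivAt_cexp_real (w : ℂ) :
    HasFDerivAt cexp (cexp w • ContinuousLinearMap.id ℝ ℂ) w :=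
  ((Complex.hasDerivAt_exp w).hasFDerivAt.restrictScalars ℝ).congr_fderiv (by ext; simp [mul_comm])

theorem hasFDerivAt_comp_cexp (hf : DifferentiableAt ℝ f (cexp w)) :
    HasFDerivAt (fun w => f (cexp w))
      ((fderiv ℝ f (cexp w)).comp (cexp w • ContinuousLinearMap.id ℝ ℂ)) w :=
  hf.hasFDerivAt.comp w (hasFDerivAt_cexp_real w)

theorem pdx_comp_cexp (hf : DifferentiableAt ℝ f (cexp w)) :
    pdx (fun w => f (cexp w)) w =
      (cexp w).re * pdx f (cexp w) + (cexp w).im * pdy f (cexp w) := by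
  rw [pdx_eq_of_hasFDerivAt (hasFDerivAt_comp_cexp hf), ← fderiv_apply_eq_pdx_pdy hf]
  simp

theorem pdx_comp_cexp_eq_pdr (hf : DifferentiableAt ℝ f (cexp w)) :
    pdx (fun w => f (cexp w)) w = ‖cexp w‖ * pdr f (cexp w) := by
  rw [pdx_comp_cexp hf, pdr, mul_div_cancel₀ _ (norm_ne_zero_iff.2 (Complex.exp_ne_zero w))]

theorem pdy_comp_cexp (hf : DifferentiableAt ℝ f (cexp w)) :
    pdy (fun w => f (cexp w)) w = pdθ f (cexp w) := by
  rw [pdy_eq_of_hasFDerivAt (hasFDerivAt_comp_cexp hf), pdθ]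
  exact (fderiv_apply_eq_pdx_pdy hf _).trans (by simp)

theorem hasFDerivAt_re_mul_add_im_mul {p q : ℂ → ℝ} {z : ℂ} (hp : DifferentiableAt ℝ p z)
    (hq : DifferentiableAt ℝ q z) :
    HasFDerivAt (fun z : ℂ => z.re * p z + z.im * q z)
      (z.re • fderiv ℝ p z + p z • reCLM + (z.im • fderiv ℝ q z + q z • imCLM)) z :=
  (reCLM.hasFDerivAt.fun_mul hp.hasFDerivAt).fun_add (imCLM.hasFDerivAt.fun_mul hq.hasFDerivAt)

theorem lap_comp_cexp (hS : IsOpen S) (hf : ContDiffOn ℝ 2 f S) (hw : cexp w ∈ S) :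
    lap (fun w => f (cexp w)) w = ‖cexp w‖ ^ 2 * lap f (cexp w) := by
  obtain ⟨-, hfx, hfy⟩ := differentiableAt_pd_of_contDiffOn hS hf hw
  have hdiff : ∀ᶠ w' in 𝓝 w, DifferentiableAt ℝ f (cexp w') := by
    filter_upwards [Complex.continuous_exp.continuousAt.preimage_mem_nhds (hS.mem_nhds hw)]
      with w' hw' using (differentiableAt_pd_of_contDiffOn hS hf hw').1
  have hx := hasFDerivAt_re_mul_add_im_mul hfx hfy
  have hy := hasFDerivAt_re_mul_add_im_mul hfy hfx.fun_neg
  have hpdθ : pdθ f = fun z => z.re * pdy f z + z.im * -pdx f z := by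
    funext z
    rw [pdθ]
    ring
  rw [lap, pdx_congr_of_eventuallyEq (hdiff.mono fun _ h => pdx_comp_cexp h),
    pdy_congr_of_eventuallyEq (hdiff.mono fun _ h => pdy_comp_cexp h), hpdθ,
    pdx_comp_cexp (f := fun z => z.re * pdx f z + z.im * pdy f z) hx.differentiableAt,
    pdy_comp_cexp (f := fun z => z.re * pdy f z + z.im * -pdx f z) hy.differentiableAt, pdθ,
    pdx_eq_of_hasFDerivAt hx, pdy_eq_of_hasFDerivAt hx, pdx_eq_of_hasFDerivAt hy,
    pdy_eq_of_hasFDerivAt hy, lap, Complex.sq_norm, Complex.normSq_apply]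
  simp only [_root_.add_apply, _root_.smul_apply, _root_.neg_apply, smul_eq_mul, reCLM_apply,
    imCLM_apply, one_re, one_im, I_re, I_im, fderiv_fun_neg, fderiv_apply_one_eq_pdx hfx,
    fderiv_apply_one_eq_pdx hfy, fderiv_apply_I_eq_pdy hfx, fderiv_apply_I_eq_pdy hfy]
  ring

theorem cexp_mem_PDisc {w : ℂ} : cexp w ∈ PDisc ↔ w.re < 0 := by
  simp [PDisc, Complex.norm_exp]

theorem isOpen_PDisc : IsOpen PDisc :=
  (isOpen_lt continuous_const continuous_norm).inter (isOpen_lt continuous_norm continuous_const)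

theorem isOpen_leftHalfPlane : IsOpen (re ⁻¹' Iio 0) := isOpen_Iio.preimage continuous_re

theorem contDiffOn_comp_cexp {n : WithTop ℕ∞} (hf : ContDiffOn ℝ n f PDisc) :
    ContDiffOn ℝ n (fun w => f (cexp w)) (re ⁻¹' Iio 0) :=
  hf.comp (Complex.contDiff_exp (𝕜 := ℝ)).contDiffOn fun _ hw => cexp_mem_PDisc.2 hw

/-- The function `H = h(e^w) - a Im w` with `dH = exp^*(dh + aφ)`: in the coordinate `w = log z`
the form `φ = -dθ` becomes the exact form `-d(Im w)`. -/
noncomputable def logPotential (h : ℂ → ℝ) (a : ℝ) (w : ℂ) : ℝ := h (cexp w) - a * w.im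

variable {h u : ℂ → ℝ} {a : ℝ}

theorem contDiffOn_logPotential {n : WithTop ℕ∞} (hh : ContDiffOn ℝ n h PDisc) :
    ContDiffOn ℝ n (logPotential h a) (re ⁻¹' Iio 0) :=
  (contDiffOn_comp_cexp hh).sub (contDiff_const.mul imCLM.contDiff).contDiffOn

theorem hasFDerivAt_logPotential (hh : DifferentiableAt ℝ h (cexp w)) :
    HasFDerivAt (logPotential h a)
      (fderiv ℝ (fun w => h (cexp w)) w - a • imCLM) w :=
  (hasFDerivAt_comp_cexp hh).differentiableAt.hasFDerivAt.sub
    (imCLM.hasFDerivAt.const_mul a)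

theorem pdx_logPotential (hh : DifferentiableAt ℝ h (cexp w)) :
    pdx (logPotential h a) w = pdx (fun w => h (cexp w)) w := by
  rw [pdx_eq_of_hasFDerivAt (hasFDerivAt_logPotential hh), _root_.sub_apply,
    fderiv_apply_one_eq_pdx (hasFDerivAt_comp_cexp hh).differentiableAt]
  simp

theorem pdy_logPotential (hh : DifferentiableAt ℝ h (cexp w)) :
    pdy (logPotential h a) w = pdy (fun w => h (cexp w)) w - a := by
  rw [pdy_eq_of_hasFDerivAt (hasFDerivAt_logPotential hh), _root_.sub_apply,
    fderiv_apply_I_eq_pdy (hasFDerivAt_comp_cexp hh).differentiableAt]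
  simp

theorem lap_logPotential (hh : ContDiffOn ℝ 2 h PDisc) (hw : w.re < 0) :
    lap (logPotential h a) w = ‖cexp w‖ ^ 2 * lap h (cexp w) := by
  have hdiff : ∀ᶠ w' in 𝓝 w, DifferentiableAt ℝ h (cexp w') := by
    filter_upwards [isOpen_leftHalfPlane.mem_nhds hw] with w' hw'
    exact (differentiableAt_pd_of_contDiffOn isOpen_PDisc hh (cexp_mem_PDisc.2 hw')).1
  rw [← lap_comp_cexp isOpen_PDisc hh (cexp_mem_PDisc.2 hw), lap,
    pdx_congr_of_eventuallyEq (hdiff.mono fun _ h => pdx_logPotential h),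
    pdy_congr_of_eventuallyEq (hdiff.mono fun _ h => pdy_logPotential h), lap, pdy,
    deriv_sub_const, ← pdy]

/-- The energy density `|dh + aφ|²`, where `φ = -dθ` has Cartesian components `y / |z|²` and
`-x / |z|²`. -/
noncomputable def twistedEnergyDensity (h : ℂ → ℝ) (a : ℝ) (z : ℂ) : ℝ :=
  (pdx h z + a * z.im / ‖z‖ ^ 2) ^ 2 + (pdy h z - a * z.re / ‖z‖ ^ 2) ^ 2

theorem norm_sq_mul_twistedEnergyDensity {z : ℂ} (hz : z ≠ 0) :
    ‖z‖ ^ 2 * twistedEnergyDensity h a z =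
      (z.re * pdx h z + z.im * pdy h z) ^ 2 + (pdθ h z - a) ^ 2 := by
  have hsq : ‖z‖ ^ 2 = z.re ^ 2 + z.im ^ 2 := by rw [Complex.sq_norm, normSq_apply]; ring
  rw [twistedEnergyDensity]
  field_simp
  rw [hsq, pdθ]
  ring

theorem lap_comp_cexp_eq_logPotential (hh : ContDiffOn ℝ 2 h PDisc)
    (hu : ContDiffOn ℝ 2 u PDisc)
    (hpde : ∀ z ∈ PDisc, lap u z = twistedEnergyDensity h a z * Real.exp (2 * u z))
    (hw : w.re < 0) :
    lap (fun w => u (cexp w)) w =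
      (pdx (logPotential h a) w ^ 2 + pdy (logPotential h a) w ^ 2)
        * Real.exp (2 * u (cexp w)) := by
  have hmem := cexp_mem_PDisc.2 hw
  have hdiff := (differentiableAt_pd_of_contDiffOn isOpen_PDisc hh hmem).1
  rw [lap_comp_cexp isOpen_PDisc hu hmem, hpde _ hmem, ← mul_assoc,
    norm_sq_mul_twistedEnergyDensity (Complex.exp_ne_zero w), pdx_logPotential hdiff,
    pdy_logPotential hdiff, pdx_comp_cexp hdiff, pdy_comp_cexp hdiff]

open scoped Matrix.Norms.Operator in
theorem isFlatConnectionOn_logPotential (hh : ContDiffOn ℝ 2 h PDisc)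
    (hu : ContDiffOn ℝ 2 u PDisc) (hharm : ∀ z ∈ PDisc, lap h z = 0)
    (hpde : ∀ z ∈ PDisc, lap u z = twistedEnergyDensity h a z * Real.exp (2 * u z)) :
    IsFlatConnectionOn (connX (logPotential h a) fun w => u (cexp w))
      (connY (logPotential h a) fun w => u (cexp w)) (re ⁻¹' Iio 0) := by
  refine isFlatConnectionOn_connX_connY isOpen_leftHalfPlane (contDiffOn_logPotential hh)
    (contDiffOn_comp_cexp hu) (fun w hw => ?_)
    fun w hw => lap_comp_cexp_eq_logPotential hh hu hpde hw
  rw [lap_logPotential hh hw, hharm _ (cexp_mem_PDisc.2 hw), mul_zero]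

theorem connX_logPotential_add_two_pi_I (hh : ContDiffOn ℝ 1 h PDisc)
    (hu : ContDiffOn ℝ 1 u PDisc) (hw : w.re < 0) :
    connX (logPotential h a) (fun w => u (cexp w)) (w + (2 * π : ℝ) * Complex.I) =
      connX (logPotential h a) (fun w => u (cexp w)) w := by
  have hexp : cexp (w + (2 * π : ℝ) * Complex.I) = cexp w := by
    simpa using Complex.exp_periodic w
  have hdiff {f : ℂ → ℝ} (hf : ContDiffOn ℝ 1 f PDisc) : DifferentiableAt ℝ f (cexp w) :=
    (hf.contDiffAt (isOpen_PDisc.mem_nhds (cexp_mem_PDisc.2 hw))).differentiableAt one_ne_zero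
  simp only [connX, pdx_logPotential, pdy_logPotential, pdx_comp_cexp, pdy_comp_cexp, hdiff hh,
    hdiff hu, hexp]

theorem Mθ_cexp (hh : DifferentiableAt ℝ h (cexp w)) (hu : DifferentiableAt ℝ u (cexp w)) :
    Mθ h u a (cexp w) = connY (logPotential h a) (fun w => u (cexp w)) w := by
  rw [connY, pdx_logPotential hh, pdy_logPotential hh, pdx_comp_cexp_eq_pdr hh, pdy_comp_cexp hh,
    pdx_comp_cexp_eq_pdr hu, pdy_comp_cexp hu]
  ext i j
  fin_cases i <;> fin_cases j <;>
    simp [Mθ, connMatrix, ω11r, ω11θ, ω22r, ω22θ] <;> ring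

end LogCoordinate

section GradientEstimate

open scoped ComplexConjugate

variable {f g V : ℂ → ℝ} {z w : ℂ} {S K : Set ℂ} {ε : ℝ}

theorem deriv_deriv_nonneg_of_isLocalMin {f : ℝ → ℝ} {x : ℝ} (hmin : IsLocalMin f x)
    (hf : ContinuousAt f x) : 0 ≤ deriv (deriv f) x := by
  by_contra! hneg
  have hconst : f =ᶠ[𝓝 x] fun _ => f x := by
    filter_upwards [hmin, isLocalMax_of_deriv_deriv_neg hneg hmin.deriv_eq_zero hf]
      with y hge hle using le_antisymm hle hge
  rw [hconst.deriv.deriv_eq] at hneg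
  simp at hneg

theorem lap_nonneg_of_isLocalMin (hmin : IsLocalMin f z) (hf : ContinuousAt f z) :
    0 ≤ lap f z := by
  have hline (v : ℂ) : 0 ≤ deriv (deriv fun t : ℝ => f (z + t * v)) 0 := by
    have hcont : ContinuousAt (fun t : ℝ => z + t * v) 0 := by fun_prop
    refine deriv_deriv_nonneg_of_isLocalMin ?_ (ContinuousAt.comp (by simpa using hf) hcont)
    have hlim : Tendsto (fun t : ℝ => z + t * v) (𝓝 0) (𝓝 z) := by simpa using hcont.tendsto
    simpa [IsLocalMin, IsMinFilter] using hlim.eventually hmin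
  have hx : pdx (pdx f) z = deriv (deriv fun t : ℝ => f (z + t * 1)) 0 := by
    rw [pdx]
    congr 1
    ext s
    simp only [pdx, mul_one, add_assoc, ← ofReal_add]
    simpa using deriv_comp_const_add (fun t : ℝ => f (z + t)) s 0
  have hy : pdy (pdy f) z = deriv (deriv fun t : ℝ => f (z + t * Complex.I)) 0 := by
    rw [pdy]
    congr 1
    ext s
    simp only [pdy, add_assoc, ← add_mul, ← ofReal_add]
    simpa using deriv_comp_const_add (fun t : ℝ => f (z + t * Complex.I)) s 0
  rw [lap, hx, hy]
  exact add_nonneg (hline 1) (hline Complex.I)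

theorem le_of_lap_lt (hS : IsOpen S) (hf : ContDiffOn ℝ 2 f S) (hg : ContDiffOn ℝ 2 g S)
    (hK : IsCompact K) (hKS : K ⊆ S) (hlap : ∀ w ∈ interior K, lap g w < lap f w)
    (hbd : ∀ w ∈ K \ interior K, f w ≤ g w) : ∀ w ∈ K, f w ≤ g w := by
  by_contra! ⟨w, hw, hgf⟩
  have hcont : ContinuousOn (fun w => g w - f w) S := hg.continuousOn.sub hf.continuousOn
  obtain ⟨w₀, hw₀, hmin⟩ := hK.exists_isMinOn ⟨w, hw⟩ (hcont.mono hKS)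
  have hneg : g w₀ - f w₀ < 0 := (hmin hw).trans_lt (sub_neg.2 hgf)
  have hw₀_int : w₀ ∈ interior K := by
    by_contra h
    exact hneg.not_ge (sub_nonneg.2 (hbd w₀ ⟨hw₀, h⟩))
  have hnonneg := lap_nonneg_of_isLocalMin (hmin.isLocalMin (mem_interior_iff_mem_nhds.1 hw₀_int))
    (hcont.continuousAt (hS.mem_nhds (hKS hw₀)))
  rw [lap_sub hS hg hf (hKS hw₀)] at hnonneg
  linarith [hlap w₀ hw₀_int]

theorem pdx_comp_re (p : ℝ → ℝ) (w : ℂ) : pdx (fun w => p w.re) w = deriv p w.re := by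
  simpa [pdx] using deriv_comp_const_add p w.re 0

theorem pdy_comp_re (p : ℝ → ℝ) (w : ℂ) : pdy (fun w => p w.re) w = 0 := by
  simp [pdy]

theorem pdx_comp_im (p : ℝ → ℝ) (w : ℂ) : pdx (fun w => p w.im) w = 0 := by
  simp [pdx]

theorem pdy_comp_im (p : ℝ → ℝ) (w : ℂ) : pdy (fun w => p w.im) w = deriv p w.im := by
  simpa [pdy] using deriv_comp_const_add p w.im 0

theorem lap_comp_re (p : ℝ → ℝ) (w : ℂ) : lap (fun w => p w.re) w = deriv (deriv p) w.re := by
  rw [lap, funext (pdx_comp_re p), funext (pdy_comp_re p), pdx_comp_re]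
  simp [pdy]

theorem lap_comp_im (p : ℝ → ℝ) (w : ℂ) : lap (fun w => p w.im) w = deriv (deriv p) w.im := by
  rw [lap, funext (pdx_comp_im p), funext (pdy_comp_im p), pdy_comp_im]
  simp [pdx]

theorem lap_comp_conj (f : ℂ → ℝ) (w : ℂ) :
    lap (fun w => f (conj w)) w = lap f (conj w) := by
  have hx (f : ℂ → ℝ) (w : ℂ) : pdx (fun w => f (conj w)) w = pdx f (conj w) := by simp [pdx]
  have hy (f : ℂ → ℝ) (w : ℂ) : pdy (fun w => f (conj w)) w = -pdy f (conj w) := by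
    simpa [pdy] using deriv_comp_neg (fun t : ℝ => f (conj w + t * Complex.I)) 0
  have hy' : pdy (fun w => -pdy f (conj w)) w = pdy (pdy f) (conj w) :=
    deriv.fun_neg.trans (neg_eq_iff_eq_neg.2 (hy (pdy f) w))
  rw [lap, funext (hx f), funext (hy f), hx (pdx f), hy', lap]

/-- The barrier `2ε (x² - 2y² + 4y)` on the half square `[-1, 1] × [0, 1]`. Its Laplacian is `-4ε`,
it is nonnegative on the real axis and at least `2ε` on the other three sides, and it grows only
linearly along the imaginary axis, so that it bounds the `y`-derivative at `0` of a function it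
dominates. -/
noncomputable def halfSquareBarrier (ε : ℝ) (w : ℂ) : ℝ :=
  2 * ε * w.re ^ 2 - 2 * ε * (2 * w.im ^ 2 - 4 * w.im)

theorem contDiff_halfSquareBarrier (ε : ℝ) : ContDiff ℝ 2 (halfSquareBarrier ε) := by
  have hre : ContDiff ℝ 2 re := reCLM.contDiff
  have him : ContDiff ℝ 2 im := imCLM.contDiff
  unfold halfSquareBarrier
  fun_prop

theorem lap_halfSquareBarrier (ε : ℝ) (w : ℂ) : lap (halfSquareBarrier ε) w = -4 * ε := by
  have hre : ContDiff ℝ 2 re := reCLM.contDiff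
  have him : ContDiff ℝ 2 im := imCLM.contDiff
  have hp : deriv (fun x : ℝ => 2 * ε * x ^ 2) = fun x => 2 * ε * (2 * x) :=
    funext fun x => (((hasDerivAt_pow 2 x).const_mul (2 * ε)).congr_deriv (by simp)).deriv
  have hq : deriv (fun y : ℝ => 2 * ε * (2 * y ^ 2 - 4 * y)) = fun y => 2 * ε * (4 * y - 4) :=
    funext fun y => (((((hasDerivAt_pow 2 y).const_mul 2).sub
      ((hasDerivAt_id y).const_mul 4)).const_mul (2 * ε)).congr_deriv (by push_cast; ring)).deriv
  refine (lap_sub isOpen_univ (f := fun w => 2 * ε * w.re ^ 2)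
    (g := fun w => 2 * ε * (2 * w.im ^ 2 - 4 * w.im)) (by fun_prop) (by fun_prop)
      (mem_univ w)).trans ?_
  rw [lap_comp_re (fun x => 2 * ε * x ^ 2), lap_comp_im (fun y => 2 * ε * (2 * y ^ 2 - 4 * y)),
    hp, hq, deriv_const_mul_field', deriv_const_mul_id', deriv_const_mul_field',
    deriv_sub_const_fun, deriv_const_mul_id']
  ring

theorem two_mul_le_halfSquareBarrier (hε : 0 ≤ ε) (him₀ : 0 ≤ w.im) (him₁ : w.im ≤ 1)
    (hedge : 1 ≤ w.re ^ 2 ∨ w.im = 1) : 2 * ε ≤ halfSquareBarrier ε w := by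
  have h : 1 ≤ w.re ^ 2 - (2 * w.im ^ 2 - 4 * w.im) := by
    rcases hedge with h | h <;> nlinarith
  rw [halfSquareBarrier]
  nlinarith

theorem conj_mem_square (hw : w ∈ Icc (-1) 1 ×ℂ Icc (-1) 1) :
    conj w ∈ Icc (-1) 1 ×ℂ Icc (-1) 1 := by
  obtain ⟨hre, h0 : -1 ≤ w.im, h1 : w.im ≤ 1⟩ := hw
  exact ⟨by simpa using hre, by simpa using ⟨by linarith, by linarith⟩⟩

theorem sub_comp_conj_le_halfSquareBarrier (hε : 0 < ε) (hS : IsOpen S)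
    (hV : ContDiffOn ℝ 2 V S) (hbox : Icc (-1) 1 ×ℂ Icc (-1) 1 ⊆ S)
    (hbound : ∀ w ∈ Icc (-1) 1 ×ℂ Icc (-1) 1, |V w| ≤ ε ∧ |lap V w| ≤ ε) :
    ∀ w ∈ Icc (-1) 1 ×ℂ Icc 0 1, V w - V (conj w) ≤ halfSquareBarrier ε w := by
  have hhalf : ∀ w ∈ Icc (-1 : ℝ) 1 ×ℂ Icc (0 : ℝ) 1,
      w ∈ Icc (-1 : ℝ) 1 ×ℂ Icc (-1 : ℝ) 1 ∧ conj w ∈ Icc (-1 : ℝ) 1 ×ℂ Icc (-1 : ℝ) 1 := by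
    intro w hw
    have hsquare : w ∈ Icc (-1 : ℝ) 1 ×ℂ Icc (-1 : ℝ) 1 :=
      ⟨hw.1, Icc_subset_Icc_left (by norm_num) hw.2⟩
    exact ⟨hsquare, conj_mem_square hsquare⟩
  have hS' : IsOpen (S ∩ conj ⁻¹' S) := hS.inter (hS.preimage continuous_conj)
  have hVS := hV.mono (inter_subset_left (t := conj ⁻¹' S))
  have hVconj : ContDiffOn ℝ 2 (fun w => V (conj w)) (S ∩ conj ⁻¹' S) :=
    hV.comp conjCLE.contDiff.contDiffOn fun w hw => hw.2
  have hsub : Icc (-1) 1 ×ℂ Icc 0 1 ⊆ S ∩ conj ⁻¹' S := fun w hw =>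
    ⟨hbox (hhalf w hw).1, hbox (hhalf w hw).2⟩
  refine le_of_lap_lt hS' (hVS.sub hVconj) (contDiff_halfSquareBarrier ε).contDiffOn
    (isCompact_Icc.reProdIm isCompact_Icc) hsub (fun w hw => ?_) fun w ⟨hw, hfrontier⟩ => ?_
  · have hmem := hhalf w (interior_subset hw)
    rw [lap_halfSquareBarrier, lap_sub hS' hVS hVconj (hsub (interior_subset hw)), lap_comp_conj]
    linarith [abs_le.1 (hbound _ hmem.1).2, abs_le.1 (hbound _ hmem.2).2]
  · rw [interior_reProdIm, interior_Icc, interior_Icc] at hfrontier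
    have him : w.im ∈ Icc (0 : ℝ) 1 := hw.2
    rcases him.1.eq_or_lt with h0 | h0
    · rw [conj_eq_iff_im.2 h0.symm, sub_self, halfSquareBarrier, ← h0]
      norm_num
      positivity
    · have hedge : 1 ≤ w.re ^ 2 ∨ w.im = 1 := by
        by_contra! ⟨hre, hne⟩
        exact hfrontier ⟨abs_lt.1 ((sq_lt_one_iff_abs_lt_one _).1 hre), h0, him.2.lt_of_ne hne⟩
      linarith [two_mul_le_halfSquareBarrier hε.le him.1 him.2 hedge,
        abs_le.1 (hbound _ (hhalf w hw).1).1, abs_le.1 (hbound _ (hhalf w hw).2).1]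

theorem abs_sub_comp_conj_le_halfSquareBarrier (hε : 0 < ε) (hS : IsOpen S)
    (hV : ContDiffOn ℝ 2 V S) (hbox : Icc (-1) 1 ×ℂ Icc (-1) 1 ⊆ S)
    (hbound : ∀ w ∈ Icc (-1) 1 ×ℂ Icc (-1) 1, |V w| ≤ ε ∧ |lap V w| ≤ ε)
    (hw : w ∈ Icc (-1) 1 ×ℂ Icc 0 1) : |V w - V (conj w)| ≤ halfSquareBarrier ε w := by
  have hconj := sub_comp_conj_le_halfSquareBarrier (V := fun w => V (conj w)) hε
    (hS.preimage continuous_conj) (hV.comp conjCLE.contDiff.contDiffOn fun w hw => hw)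
    (fun w hw => hbox (conj_mem_square hw))
    (fun w hw => by simpa only [lap_comp_conj] using hbound _ (conj_mem_square hw)) w hw
  rw [conj_conj] at hconj
  exact abs_sub_le_iff.2 ⟨sub_comp_conj_le_halfSquareBarrier hε hS hV hbox hbound w hw, hconj⟩

theorem abs_pdy_zero_le (hε : 0 < ε) (hS : IsOpen S)
    (hV : ContDiffOn ℝ 2 V S) (hbox : Icc (-1) 1 ×ℂ Icc (-1) 1 ⊆ S)
    (hbound : ∀ w ∈ Icc (-1) 1 ×ℂ Icc (-1) 1, |V w| ≤ ε ∧ |lap V w| ≤ ε) :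
    |pdy V 0| ≤ 4 * ε := by
  have hodd : ∀ y ∈ Icc (0 : ℝ) 1, |V (y * Complex.I) - V (-(y * Complex.I))| ≤ 8 * ε * y := by
    intro y hy
    have hle := abs_sub_comp_conj_le_halfSquareBarrier hε hS hV hbox hbound
      (w := y * Complex.I) (by simpa [mem_reProdIm] using hy)
    refine (le_of_eq_of_le (by simp) hle).trans ?_
    have hsq : 0 ≤ ε * y ^ 2 := by positivity
    simp only [halfSquareBarrier, re_ofReal_mul, im_ofReal_mul, I_re, I_im]
    linarith
  have hV0 : DifferentiableAt ℝ V 0 :=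
    (differentiableAt_pd_of_contDiffOn hS hV (hbox (by simp [mem_reProdIm]))).1
  have hderiv : HasDerivAt (fun y : ℝ => V (y * Complex.I)) (pdy V 0) 0 := by
    simpa [fderiv_apply_I_eq_pdy hV0] using
      hasDerivAt_comp_vertical_line (f := V) (x := 0) (y := 0) (by simpa using hV0)
  have hderiv₂ : HasDerivAt (fun y : ℝ => V (y * Complex.I) - V (((-y : ℝ) : ℂ) * Complex.I))
      (2 * pdy V 0) 0 := by
    refine (hderiv.sub (HasDerivAt.scomp (0 : ℝ) (by simpa using hderiv)
      (hasDerivAt_neg (0 : ℝ)))).congr_deriv ?_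
    rw [neg_smul, one_smul, sub_neg_eq_add, two_mul]
  have h8 := hderiv₂.le_of_lip' (C := 8 * ε) (by positivity) ?_
  · rw [norm_mul, Real.norm_two, Real.norm_eq_abs] at h8
    linarith
  filter_upwards [Icc_mem_nhds (show (-1 : ℝ) < 0 by norm_num) one_pos] with y hy
  rcases le_total 0 y with h | h
  · simpa [abs_of_nonneg h] using hodd y ⟨h, hy.2⟩
  · simpa [abs_of_nonpos h, abs_sub_comm] using hodd (-y) ⟨by linarith, by linarith [hy.1]⟩

theorem lap_comp_const_add (f : ℂ → ℝ) (z w : ℂ) :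
    lap (fun w => f (z + w)) w = lap f (z + w) := by
  simp [lap, pdx, pdy, add_assoc]

theorem pdy_comp_const_add_conj_mul_I (f : ℂ → ℝ) (z w : ℂ) :
    pdy (fun w => f (z + conj w * Complex.I)) w = pdx f (z + conj w * Complex.I) := by
  simp [pdx, pdy, add_mul, mul_assoc, add_assoc]

theorem pdx_comp_const_add_conj_mul_I (f : ℂ → ℝ) (z w : ℂ) :
    pdx (fun w => f (z + conj w * Complex.I)) w = pdy f (z + conj w * Complex.I) := by
  simp [pdx, pdy, add_mul, add_assoc]

theorem lap_comp_const_add_conj_mul_I (f : ℂ → ℝ) (z w : ℂ) :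
    lap (fun w => f (z + conj w * Complex.I)) w = lap f (z + conj w * Complex.I) := by
  rw [lap, funext (pdx_comp_const_add_conj_mul_I f z), funext (pdy_comp_const_add_conj_mul_I f z),
    pdx_comp_const_add_conj_mul_I (pdy f), pdy_comp_const_add_conj_mul_I (pdx f), add_comm, lap]

theorem abs_pdx_le_and_abs_pdy_le (hε : 0 < ε) (hS : IsOpen S) (hV : ContDiffOn ℝ 2 V S)
    (hbound : ∀ w ∈ Icc (-1) 1 ×ℂ Icc (-1) 1,
      z + w ∈ S ∧ |V (z + w)| ≤ ε ∧ |lap V (z + w)| ≤ ε) :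
    |pdx V z| ≤ 4 * ε ∧ |pdy V z| ≤ 4 * ε := by
  have hswap : ∀ w ∈ Icc (-1 : ℝ) 1 ×ℂ Icc (-1 : ℝ) 1,
      conj w * Complex.I ∈ Icc (-1 : ℝ) 1 ×ℂ Icc (-1 : ℝ) 1 := fun w hw => by
    simpa [mem_reProdIm] using hw.symm
  constructor
  -- `w ↦ conj w * I` swaps the coordinate axes, which reduces `pdx` to `pdy`.
  · have hx := abs_pdy_zero_le (V := fun w => V (z + conj w * Complex.I)) hε
      (hS.preimage (f := fun w => z + conj w * Complex.I) (by fun_prop))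
      (hV.comp (contDiff_const.add (conjCLE.contDiff.mul contDiff_const)).contDiffOn fun _ h => h)
      (fun w hw => (hbound _ (hswap w hw)).1)
      fun w hw => by simpa only [lap_comp_const_add_conj_mul_I] using (hbound _ (hswap w hw)).2
    simpa [pdy_comp_const_add_conj_mul_I] using hx
  · have hy := abs_pdy_zero_le (V := fun w => V (z + w)) hε
      (hS.preimage (continuous_const_add z))
      (hV.comp (contDiff_const.add contDiff_id).contDiffOn fun _ h => h)
      (fun w hw => (hbound _ hw).1)
      fun w hw => by simpa only [lap_comp_const_add] using (hbound _ hw).2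
    simpa [pdy] using hy

theorem eventually_comap_re_atBot_forall_add {p : ℂ → Prop}
    (hp : ∀ᶠ z in comap re atBot, p z) :
    ∀ᶠ z in comap re atBot, ∀ w ∈ Icc (-1) 1 ×ℂ Icc (-1) 1, p (z + w) := by
  obtain ⟨x₀, hx₀⟩ := ((atBot_basis.comap re).eventually_iff).1 hp
  refine (atBot_basis.comap re).eventually_iff.2 ⟨x₀ - 1, trivial, fun z hz w hw => hx₀.2 ?_⟩
  have hz' : z.re ≤ x₀ - 1 := hz
  simpa using (show z.re + w.re ≤ x₀ by linarith [hw.1.2])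

theorem tendsto_pdx_and_pdy_zero (hV : ContDiffOn ℝ 2 V (re ⁻¹' Iio 0))
    (hV0 : Tendsto V (comap re atBot) (𝓝 0)) (hlap : Tendsto (lap V) (comap re atBot) (𝓝 0)) :
    Tendsto (pdx V) (comap re atBot) (𝓝 0) ∧ Tendsto (pdy V) (comap re atBot) (𝓝 0) := by
  have hgrad : ∀ ε > 0, ∀ᶠ z in comap re atBot, |pdx V z| ≤ 4 * ε ∧ |pdy V z| ≤ 4 * ε := by
    intro ε hε
    have hclose : ∀ᶠ z in comap re atBot, z ∈ re ⁻¹' Iio 0 ∧ |V z| ≤ ε ∧ |lap V z| ≤ ε := by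
      filter_upwards [preimage_mem_comap (Iio_mem_atBot (0 : ℝ)),
        hV0.eventually (Metric.closedBall_mem_nhds _ hε),
        hlap.eventually (Metric.closedBall_mem_nhds _ hε)] with z hre h₁ h₂
      exact ⟨hre, by simpa using h₁, by simpa using h₂⟩
    filter_upwards [eventually_comap_re_atBot_forall_add hclose] with z hz
    exact abs_pdx_le_and_abs_pdy_le hε isOpen_leftHalfPlane hV hz
  constructor <;>
  · refine Metric.nhds_basis_closedBall.tendsto_right_iff.2 fun ε hε => ?_
    filter_upwards [hgrad (ε / 4) (by positivity)] with z hz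
    simp only [Metric.mem_closedBall, dist_zero_right, Real.norm_eq_abs]
    linarith [hz.1, hz.2]

end GradientEstimate

section Asymptotics

theorem tendsto_pdx_and_pdy_of_tendsto_sub_comp_re {U : ℂ → ℝ} {p : ℝ → ℝ} {b : ℝ}
    (hU : ContDiffOn ℝ 2 U (re ⁻¹' Iio 0)) (hp : ContDiffOn ℝ 2 p (Iio 0))
    (hUp : Tendsto (fun w => U w - p w.re) (comap re atBot) (𝓝 0))
    (hlap : Tendsto (lap U) (comap re atBot) (𝓝 0)) (hp' : Tendsto (deriv p) atBot (𝓝 b))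
    (hp'' : Tendsto (deriv (deriv p)) atBot (𝓝 0)) :
    Tendsto (pdx U) (comap re atBot) (𝓝 b) ∧ Tendsto (pdy U) (comap re atBot) (𝓝 0) := by
  have hpre : ContDiffOn ℝ 2 (fun w => p w.re) (re ⁻¹' Iio 0) :=
    hp.comp reCLM.contDiff.contDiffOn fun _ h => h
  have hleft : ∀ᶠ w in comap re atBot, w ∈ re ⁻¹' Iio 0 :=
    preimage_mem_comap (Iio_mem_atBot (0 : ℝ))
  have hlapW : Tendsto (lap fun w => U w - p w.re) (comap re atBot) (𝓝 0) := by
    have h := hlap.sub (hp''.comp tendsto_comap)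
    rw [sub_zero] at h
    refine h.congr' (hleft.mono fun w hw => ?_)
    rw [lap_sub isOpen_leftHalfPlane hU hpre hw, lap_comp_re]
    rfl
  obtain ⟨hx, hy⟩ := tendsto_pdx_and_pdy_zero (hU.sub hpre) hUp hlapW
  have hdiff : ∀ᶠ w in comap re atBot,
      DifferentiableAt ℝ U w ∧ DifferentiableAt ℝ (fun w => p w.re) w := hleft.mono fun w hw =>
    ⟨(differentiableAt_pd_of_contDiffOn isOpen_leftHalfPlane hU hw).1,
      (differentiableAt_pd_of_contDiffOn isOpen_leftHalfPlane hpre hw).1⟩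
  constructor
  · have h := hx.add (hp'.comp tendsto_comap)
    rw [zero_add] at h
    refine h.congr' (hdiff.mono fun w hw => ?_)
    rw [pdx_sub hw.1 hw.2, pdx_comp_re, Function.comp_apply, sub_add_cancel]
  · refine hy.congr' (hdiff.mono fun w hw => ?_)
    rw [pdy_sub hw.1 hw.2, pdy_comp_re, sub_zero]

theorem tendsto_pdx_and_pdy_of_log_asymptotics {U : ℂ → ℝ} {β κ c : ℝ}
    (hU : ContDiffOn ℝ 2 U (re ⁻¹' Iio 0))
    (hlim : Tendsto (fun w => U w + β * w.re + κ * Real.log w.re) (comap re atBot) (𝓝 c))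
    (hlap : Tendsto (lap U) (comap re atBot) (𝓝 0)) :
    Tendsto (pdx U) (comap re atBot) (𝓝 (-β)) ∧ Tendsto (pdy U) (comap re atBot) (𝓝 0) := by
  let p : ℝ → ℝ := fun x => c - β * x - κ * Real.log x
  have hp' : ∀ x < 0, deriv p x = -β - κ * x⁻¹ := fun x hx =>
    ((((hasDerivAt_id x).const_mul β).const_sub c).sub
      ((Real.hasDerivAt_log hx.ne).const_mul κ)).deriv.trans (by simp)
  have hp'' : ∀ x < 0, deriv (deriv p) x = κ * (x ^ 2)⁻¹ := fun x hx => by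
    rw [EventuallyEq.deriv_eq ((eventually_lt_nhds hx).mono hp')]
    exact (((hasDerivAt_inv hx.ne).const_mul κ).const_sub (-β)).deriv.trans (by ring)
  refine tendsto_pdx_and_pdy_of_tendsto_sub_comp_re (p := p) hU ?_ ?_ hlap ?_ ?_
  · have hlog : ContDiffOn ℝ 2 Real.log (Iio 0) := Real.contDiffOn_log.mono fun x hx => hx.ne
    exact (contDiff_const.sub (contDiff_const.mul contDiff_id)).contDiffOn.sub
      (contDiffOn_const.mul hlog)
  · have h := hlim.sub_const c
    rw [sub_self] at h
    refine h.congr fun w => ?_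
    simp only [p]
    ring
  · have h := (tendsto_inv_atBot_zero (𝕜 := ℝ)).const_mul κ |>.const_sub (-β)
    rw [mul_zero, sub_zero] at h
    exact h.congr' ((eventually_lt_atBot 0).mono fun x hx => (hp' x hx).symm)
  · have h := ((tendsto_inv_atBot_zero (𝕜 := ℝ)).pow 2).const_mul κ
    simp only [ne_eq, OfNat.ofNat_ne_zero, not_false_eq_true, zero_pow, mul_zero] at h
    exact h.congr' ((eventually_lt_atBot 0).mono fun x hx => by rw [hp'' x hx, inv_pow])

theorem tendsto_cexp_comap_re_atBot_nhdsWithin_PDisc :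
    Tendsto cexp (comap re atBot) (𝓝[PDisc] 0) := by
  have hlim : Tendsto cexp (comap re atBot) (𝓝[≠] 0) := by
    rw [← Complex.comap_exp_nhdsNE]
    exact tendsto_comap
  refine tendsto_nhdsWithin_iff.2 ⟨hlim.mono_right nhdsWithin_le_nhds, ?_⟩
  filter_upwards [preimage_mem_comap (Iio_mem_atBot (0 : ℝ))] with w hw using cexp_mem_PDisc.2 hw

theorem tendsto_connMatrix {ι : Type*} {l : Filter ι} {p q r s : ι → ℝ} {p₀ q₀ r₀ s₀ : ℝ}
    (hp : Tendsto p l (𝓝 p₀)) (hq : Tendsto q l (𝓝 q₀)) (hr : Tendsto r l (𝓝 r₀))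
    (hs : Tendsto s l (𝓝 s₀)) :
    Tendsto (fun i => connMatrix (p i) (q i) (r i) (s i)) l (𝓝 (connMatrix p₀ q₀ r₀ s₀)) := by
  simp only [connMatrix_eq_smul_sum (p _), connMatrix_eq_smul_sum p₀]
  exact (((hp.smul_const _).add (hq.smul_const _)).add (hr.smul_const _)).add (hs.smul_const _)

theorem tendsto_connY {H U : ℂ → ℝ} {β κ c : ℝ} (hU : ContDiffOn ℝ 2 U (re ⁻¹' Iio 0))
    (hpde : ∀ w ∈ re ⁻¹' Iio 0, lap U w = (pdx H w ^ 2 + pdy H w ^ 2) * Real.exp (2 * U w))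
    (hlim : Tendsto (fun w => U w + β * w.re + κ * Real.log w.re) (comap re atBot) (𝓝 c))
    (hlap : Tendsto (lap U) (comap re atBot) (𝓝 0)) :
    Tendsto (connY H U) (comap re atBot) (𝓝 (connMatrix 0 0 0 β)) := by
  obtain ⟨hUx, hUy⟩ := tendsto_pdx_and_pdy_of_log_asymptotics hU hlim hlap
  have hsqrt := hlap.sqrt
  rw [Real.sqrt_zero] at hsqrt
  have hbound : ∀ᶠ w in comap re atBot, |Real.exp (U w) * pdx H w| ≤ √(lap U w) ∧
      |Real.exp (U w) * pdy H w| ≤ √(lap U w) := by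
    filter_upwards [preimage_mem_comap (Iio_mem_atBot (0 : ℝ))] with w hw
    have hsq : lap U w = (Real.exp (U w) * pdx H w) ^ 2 + (Real.exp (U w) * pdy H w) ^ 2 := by
      rw [hpde w hw, two_mul, Real.exp_add]
      ring
    rw [hsq]
    exact ⟨Real.abs_le_sqrt (le_add_of_nonneg_right (sq_nonneg _)),
      Real.abs_le_sqrt (le_add_of_nonneg_left (sq_nonneg _))⟩
  have hHx := squeeze_zero_norm' (f := fun w => Real.exp (U w) * pdx H w)
    (hbound.mono fun _ hw => hw.1) hsqrt
  have hHy := squeeze_zero_norm' (f := fun w => Real.exp (U w) * pdy H w)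
    (hbound.mono fun _ hw => hw.2) hsqrt
  simpa using! tendsto_connMatrix hHy hHx.neg hUy hUx.neg

end Asymptotics

section Holonomy

open scoped Matrix.Norms.Operator

theorem hasDerivAt_matrix_of_forall {m n : Type*} [Finite m] [Finite n]
    {M : ℝ → Matrix m n ℝ} {M' : Matrix m n ℝ} {t : ℝ}
    (hM : ∀ i j, HasDerivAt (fun s => M s i j) (M' i j) t) : HasDerivAt M M' t := by
  have := Fintype.ofFinite m
  have := Fintype.ofFinite n
  exact hasDerivAt_pi.2 fun i => hasDerivAt_pi.2 fun j => hM i j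

/-- The rotation matrix by the angle `-t`, which is the parallel transport along a vertical segment
of the constant connection with `dy`-coefficient `connMatrix 0 0 0 β` when `t = β s / 2`. -/
noncomputable def rotationMatrix (t : ℝ) : Matrix (Fin 2) (Fin 2) ℝ :=
  !![Real.cos t, Real.sin t; -Real.sin t, Real.cos t]

theorem hasDerivAt_rotationMatrix (β s : ℝ) :
    HasDerivAt (fun s => rotationMatrix (β / 2 * s))
      (-connMatrix 0 0 0 β * rotationMatrix (β / 2 * s)) s := by
  have harg : HasDerivAt (fun s => β / 2 * s) (β / 2) s := by
    simpa using (hasDerivAt_id s).const_mul (β / 2)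
  have hcos := harg.cos
  have hsin := harg.sin
  refine hasDerivAt_matrix_of_forall fun i j => ?_
  fin_cases i <;> fin_cases j
  · exact hcos.congr_deriv (by simp [connMatrix, rotationMatrix, mul_apply]; ring)
  · exact hsin.congr_deriv (by simp [connMatrix, rotationMatrix, mul_apply]; ring)
  · exact hsin.neg.congr_deriv (by simp [connMatrix, rotationMatrix, mul_apply]; ring)
  · exact hcos.congr_deriv (by simp [connMatrix, rotationMatrix, mul_apply]; ring)

theorem trace_transport_eq_two_mul_cos {A B : ℂ → Matrix (Fin 2) (Fin 2) ℝ} {U : Set ℝ} {β : ℝ}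
    {l : Filter ℝ} [l.NeBot] (hAB : IsFlatConnectionOn A B (re ⁻¹' U)) (hU : IsOpen U)
    (hUconv : Convex ℝ U) (hl : U ∈ l) {Φ : ℝ → ℝ → Matrix (Fin 2) (Fin 2) ℝ}
    (hA : ∀ x ∈ U, A (x + (2 * π : ℝ) * Complex.I) = A x)
    (hB : Tendsto B (comap re l) (𝓝 (connMatrix 0 0 0 β))) (hΦ0 : ∀ x ∈ U, Φ x 0 = 1)
    (hΦ : ∀ x ∈ U, ∀ s : ℝ, ∀ i j, HasDerivAt (fun s => Φ x s i j)
      ((-B (x + s * Complex.I) * Φ x s) i j) s) {x : ℝ} (hx : x ∈ U) :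
    trace (Φ x (2 * π)) = 2 * Real.cos (π * β) := by
  have htrace : trace (rotationMatrix (β / 2 * (2 * π))) = 2 * Real.cos (π * β) := by
    rw [show β / 2 * (2 * π) = π * β by ring, rotationMatrix, trace_fin_two_of, two_mul]
  rw [← htrace]
  exact hAB.tracial_transport_eq_of_tendsto hU hUconv hl two_pi_pos.le hA hB hΦ0
    (fun x hx s _ => hasDerivAt_matrix_of_forall (hΦ x hx s))
    (by simp [rotationMatrix, one_fin_two]) (fun s _ => hasDerivAt_rotationMatrix β s)
    (traceLinearMap (Fin 2) ℝ ℝ).toContinuousLinearMap trace_mul_comm hx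

end Holonomy

section FiniteOrder

variable {a : ℝ} {h u : ℂ → ℝ}

theorem tendsto_log_norm_nhdsWithin_PDisc :
    Tendsto (fun z : ℂ => Real.log ‖z‖) (𝓝[PDisc] 0) atBot :=
  (Real.tendsto_log_nhdsGT_zero.comp tendsto_norm_nhdsNE_zero).mono_left
    (nhdsWithin_mono 0 fun _ hz => norm_pos_iff.1 hz.1)

theorem exists_log_asymptotics {m β : ℝ}
    (hcase :
      (β < m ∧ ∃ c : ℝ, Tendsto (fun z => u z + β * Real.log ‖z‖) (𝓝[PDisc] 0) (𝓝 c)) ∨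
      (β = m ∧ ∃ c : ℝ, Tendsto (fun z => u z + m * Real.log ‖z‖ + Real.log |Real.log ‖z‖|)
        (𝓝[PDisc] 0) (𝓝 c))) :
    Tendsto (fun z => u z + m * Real.log ‖z‖) (𝓝[PDisc] 0) atBot ∧ ∃ κ c : ℝ,
      Tendsto (fun z => u z + β * Real.log ‖z‖ + κ * Real.log |Real.log ‖z‖|)
        (𝓝[PDisc] 0) (𝓝 c) := by
  have hlog := tendsto_log_norm_nhdsWithin_PDisc
  rcases hcase with ⟨hβ, c, hc⟩ | ⟨rfl, c, hc⟩
  · refine ⟨?_, 0, c, by simpa using hc⟩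
    exact (hc.add_atBot (hlog.const_mul_atBot (sub_pos.2 hβ))).congr fun z => by ring
  · refine ⟨?_, 1, c, by simpa using hc⟩
    have hloglog : Tendsto (fun z : ℂ => -Real.log |Real.log ‖z‖|) (𝓝[PDisc] 0) atBot :=
      tendsto_neg_atTop_atBot.comp
        (Real.tendsto_log_atTop.comp (tendsto_abs_atBot_atTop.comp hlog))
    exact (hc.add_atBot hloglog).congr fun z => by ring

theorem norm_sq_mul_twistedEnergyDensity_eq_norm_sq {z : ℂ} (hz : z ≠ 0) :
    ‖z‖ ^ 2 * twistedEnergyDensity h a z =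
      ‖z * (pdx h z - pdy h z * Complex.I) + a * Complex.I‖ ^ 2 := by
  rw [norm_sq_mul_twistedEnergyDensity hz, Complex.sq_norm, normSq_apply, pdθ]
  simp only [add_re, add_im, mul_re, mul_im, sub_re, sub_im, ofReal_re, ofReal_im, I_re, I_im]
  ring

theorem isBigO_mul_zpow_mul_add_mul_I {G : ℂ → ℂ} {N n : ℤ}
    (hG : G =O[𝓝[PDisc] 0] fun _ => (1 : ℝ)) (hnN : n ≤ N) (han : a = 0 ∨ n ≤ -1) :
    (fun z => z * (z ^ N * G z) + a * Complex.I) =O[𝓝[PDisc] 0] fun z => ‖z‖ ^ (n + 1) := by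
  have hpow {p q : ℤ} (hpq : p ≤ q) :
      (fun z : ℂ => z ^ q) =O[𝓝[PDisc] 0] fun z => ‖z‖ ^ p :=
    Asymptotics.IsBigO.of_bound 1 <| eventually_mem_nhdsWithin.mono fun z hz => by
      rw [one_mul, norm_zpow, norm_zpow, norm_norm]
      exact zpow_le_zpow_right_of_le_one₀ hz.1 hz.2.le hpq
  refine .add ?_ ?_
  · refine ((hpow (add_le_add_left hnN 1)).mul hG).congr' ?_ (by simp)
    filter_upwards [eventually_mem_nhdsWithin] with z hz
    rw [zpow_add_one₀ (norm_pos_iff.1 hz.1), mul_comm (z ^ N), mul_assoc]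
  · rcases han with rfl | hn
    · simpa using Asymptotics.isBigO_zero _ _
    · simpa using (hpow (show n + 1 ≤ 0 by lia)).const_mul_left (a * Complex.I)

theorem tendsto_norm_sq_mul_lap_zero {G : ℂ → ℂ} {N n : ℤ}
    (hpde : ∀ z ∈ PDisc, lap u z = twistedEnergyDensity h a z * Real.exp (2 * u z))
    (hG : G =O[𝓝[PDisc] 0] fun _ => (1 : ℝ))
    (hord : ∀ z ∈ PDisc, (pdx h z : ℂ) - (pdy h z : ℂ) * Complex.I = z ^ N * G z)
    (hnN : n ≤ N) (han : a = 0 ∨ n ≤ -1)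
    (hu : Tendsto (fun z => u z + (n + 1) * Real.log ‖z‖) (𝓝[PDisc] 0) atBot) :
    Tendsto (fun z => ‖z‖ ^ 2 * lap u z) (𝓝[PDisc] 0) (𝓝 0) := by
  have hexp : Tendsto (fun z => ‖z‖ ^ (n + 1) * Real.exp (u z)) (𝓝[PDisc] 0) (𝓝 0) := by
    refine (Real.tendsto_exp_atBot.comp hu).congr' ?_
    filter_upwards [eventually_mem_nhdsWithin] with z hz
    rw [Function.comp_apply, Real.exp_add, mul_comm, mul_comm ((n : ℝ) + 1), Real.exp_mul,
      Real.exp_log hz.1, ← Real.rpow_intCast, Int.cast_add, Int.cast_one]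
  have hprod := ((isBigO_mul_zpow_mul_add_mul_I hG hnN han).norm_left.mul
    (Asymptotics.isBigO_refl (fun z => Real.exp (u z)) _)).trans_tendsto hexp
  have hsq := hprod.pow 2
  rw [zero_pow two_ne_zero] at hsq
  refine hsq.congr' ?_
  filter_upwards [eventually_mem_nhdsWithin] with z hz
  rw [hpde z hz, ← mul_assoc (‖z‖ ^ 2),
    norm_sq_mul_twistedEnergyDensity_eq_norm_sq (norm_pos_iff.1 hz.1), hord z hz, mul_pow,
    ← Real.exp_nat_mul, Nat.cast_ofNat]

end FiniteOrder

theorem tendsto_comp_cexp_add_log {u : ℂ → ℝ} {β κ c : ℝ}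
    (hlim : Tendsto (fun z => u z + β * Real.log ‖z‖ + κ * Real.log |Real.log ‖z‖|)
      (𝓝[PDisc] 0) (𝓝 c)) :
    Tendsto (fun w => u (cexp w) + β * w.re + κ * Real.log w.re) (comap re atBot) (𝓝 c) :=
  (hlim.comp tendsto_cexp_comap_re_atBot_nhdsWithin_PDisc).congr fun w => by
    rw [Function.comp_apply, Complex.norm_exp, Real.log_exp, Real.log_abs]

theorem tendsto_lap_comp_cexp {u : ℂ → ℝ} (hu : ContDiffOn ℝ 2 u PDisc)
    (hlap : Tendsto (fun z => ‖z‖ ^ 2 * lap u z) (𝓝[PDisc] 0) (𝓝 0)) :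
    Tendsto (lap fun w => u (cexp w)) (comap re atBot) (𝓝 0) := by
  refine (hlap.comp tendsto_cexp_comap_re_atBot_nhdsWithin_PDisc).congr' ?_
  filter_upwards [preimage_mem_comap (Iio_mem_atBot (0 : ℝ))] with w hw
  exact (lap_comp_cexp isOpen_PDisc hu (cexp_mem_PDisc.2 hw)).symm

theorem stmt17_general (a : ℝ) (h u : ℂ → ℝ)
    (hh : ContDiffOn ℝ 2 h PDisc) (hu : ContDiffOn ℝ 2 u PDisc)
    (hharm : ∀ z ∈ PDisc, lap h z = 0)
    (hpde : ∀ z ∈ PDisc, lap u z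
      = ((pdx h z + a * z.im / ‖z‖ ^ 2) ^ 2 + (pdy h z - a * z.re / ‖z‖ ^ 2) ^ 2)
        * Real.exp (2 * u z))
    (hlap : Tendsto (fun z => ‖z‖ ^ 2 * lap u z) (𝓝[PDisc] 0) (𝓝 0))
    (β κ c : ℝ)
    (hlim : Tendsto (fun z => u z + β * Real.log ‖z‖ + κ * Real.log |Real.log ‖z‖|)
      (𝓝[PDisc] 0) (𝓝 c))
    (Φ : ℝ → ℝ → Matrix (Fin 2) (Fin 2) ℝ)
    (hΦ0 : ∀ r ∈ Ioo (0 : ℝ) 1, Φ r 0 = 1)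
    (hΦode : ∀ r ∈ Ioo (0 : ℝ) 1, ∀ s : ℝ, ∀ i j : Fin 2,
      HasDerivAt (fun s' => Φ r s' i j)
        ((-Mθ h u a ((r : ℂ) * Complex.exp ((s : ℝ) * Complex.I)) * Φ r s) i j) s) :
    ∀ r ∈ Ioo (0 : ℝ) 1, Matrix.trace (Φ r (2 * π)) = 2 * Real.cos (π * β) := by
  intro r hr
  have hmem : ∀ x ∈ Iio (0 : ℝ), Real.exp x ∈ Ioo (0 : ℝ) 1 := fun x hx =>
    ⟨Real.exp_pos x, Real.exp_lt_one_iff.2 hx⟩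
  have hode : ∀ x ∈ Iio (0 : ℝ), ∀ s : ℝ, ∀ i j,
      HasDerivAt (fun s' => Φ (Real.exp x) s' i j)
        ((-connY (logPotential h a) (fun w => u (cexp w)) (x + s * Complex.I) *
          Φ (Real.exp x) s) i j) s := fun x hx s i j => by
    have hw : cexp (x + s * Complex.I) ∈ PDisc := cexp_mem_PDisc.2 (by simpa using hx)
    rw [← Mθ_cexp (differentiableAt_pd_of_contDiffOn isOpen_PDisc hh hw).1
      (differentiableAt_pd_of_contDiffOn isOpen_PDisc hu hw).1, Complex.exp_add, ← ofReal_exp]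
    exact hΦode _ (hmem x hx) s i j
  have hlimit := tendsto_connY (contDiffOn_comp_cexp hu)
    (fun w hw => lap_comp_cexp_eq_logPotential hh hu hpde hw) (tendsto_comp_cexp_add_log hlim)
    (tendsto_lap_comp_cexp hu hlap)
  have htrace := trace_transport_eq_two_mul_cos (Φ := fun x => Φ (Real.exp x))
    (isFlatConnectionOn_logPotential hh hu hharm hpde) isOpen_Iio (convex_Iio 0)
    (Iio_mem_atBot 0)
    (fun x hx => connX_logPotential_add_two_pi_I (hh.of_le one_le_two) (hu.of_le one_le_two) hx)
    hlimit (fun x hx => hΦ0 _ (hmem x hx)) hode (Real.log_neg hr.1 hr.2)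
  rwa [Real.exp_log hr.1] at htrace

theorem stmt17 (a : ℝ) (h u : ℂ → ℝ)
    (hh : ContDiffOn ℝ 2 h PDisc) (hu : ContDiffOn ℝ 2 u PDisc)
    (hharm : ∀ z ∈ PDisc, lap h z = 0)
    (hpde : ∀ z ∈ PDisc, lap u z
      = ((pdx h z + a * z.im / ‖z‖ ^ 2) ^ 2 + (pdy h z - a * z.re / ‖z‖ ^ 2) ^ 2)
        * Real.exp (2 * u z))
    (N : ℤ) (G : ℂ → ℂ)
    (hGhol : DifferentiableOn ℂ G (Metric.ball (0 : ℂ) 1)) (hG0 : G 0 ≠ 0)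
    (hord : ∀ z ∈ PDisc, (pdx h z : ℂ) - (pdy h z : ℂ) * Complex.I = z ^ N * G z)
    (n : ℤ) (hn : n = if a = 0 then N else min (-1) N)
    (β : ℝ)
    (hcase :
      (β < (n : ℝ) + 1 ∧ ∃ c : ℝ,
        Tendsto (fun z => u z + β * Real.log ‖z‖) (𝓝[PDisc] 0) (𝓝 c)) ∨
      (β = (n : ℝ) + 1 ∧ ∃ c : ℝ,
        Tendsto (fun z => u z + ((n : ℝ) + 1) * Real.log ‖z‖ + Real.log |Real.log ‖z‖|)
          (𝓝[PDisc] 0) (𝓝 c)))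
    -- the parallel transport Φ_r along the circle of radius r
    (Φ : ℝ → ℝ → Matrix (Fin 2) (Fin 2) ℝ)
    (hΦ0 : ∀ r ∈ Ioo (0 : ℝ) 1, Φ r 0 = 1)
    (hΦode : ∀ r ∈ Ioo (0 : ℝ) 1, ∀ s : ℝ, ∀ i j : Fin 2,
      HasDerivAt (fun s' => Φ r s' i j)
        ((-Mθ h u a ((r : ℂ) * Complex.exp ((s : ℝ) * Complex.I)) * Φ r s) i j) s) :
    ∀ r ∈ Ioo (0 : ℝ) 1,
      Matrix.trace (Φ r (2 * π)) = 2 * Real.cos (π * β) := by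
  obtain ⟨hbot, κ, c, hlim⟩ := exists_log_asymptotics hcase
  have hG := (hGhol.differentiableAt (Metric.ball_mem_nhds 0 one_pos)).continuousAt
  have hlap := tendsto_norm_sq_mul_lap_zero hpde
    ((hG.tendsto.isBigO_one ℝ).mono nhdsWithin_le_nhds) hord (by grind) (by grind) hbot
  exact stmt17_general a h u hh hu hharm hpde hlap β κ c hlim Φ hΦ0 hΦode
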